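/- arXiv:1811.11970 — 6 statements merged into one kernel-verified Lean document; each statement's English description precedes it below -/
import Mathlib

section
/- For every fixed integer vector z of parking-space pairs, the linear program (OP) has an integral optimal solution. Precisely: there exists a feasible solution (F^{t+}, F^{t-}, E^t)_{t∈T} all of whose entries are integers whose objective value Σ_{t∈T} Σ_{n,n'∈N} E^t_{n,n'} is less than or equal to the objective value of every feasible solution. -/
open Finset

/-- Feasibility of a solution `(F⁺, F⁻, E)` of the linear program (OP) for a fixed
vector `z` of parking-space pairs.  `Nb s n` means node `n` is in the neighbourhood of
station `s`; `v t` is the pair capacity in time period `t`; `OD t` is the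
origin–destination matrix in time period `t`. -/
def OPFeasible {T N S : Type*} [Fintype N] [Fintype S]
    (Nb : S → N → Prop) [∀ s n, Decidable (Nb s n)]
    (v : T → ℕ) (OD : T → N → N → ℕ) (z : S → ℕ)
    (Fp Fm : T → S → N → ℝ) (E : T → N → N → ℝ) : Prop :=
  (∀ t s n, 0 ≤ Fp t s n) ∧ (∀ t s n, 0 ≤ Fm t s n) ∧ (∀ t n n', 0 ≤ E t n n') ∧
  (∀ t s n, ¬ Nb s n → Fp t s n = 0) ∧ (∀ t s n, ¬ Nb s n → Fm t s n = 0) ∧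
  -- (1) station capacity
  (∀ t s, ∑ n ∈ univ.filter (fun n => Nb s n), (Fp t s n + Fm t s n) ≤ (v t : ℝ) * z s) ∧
  -- (2) inward flow assignment
  (∀ t n, ∑ s ∈ univ.filter (fun s => Nb s n), Fp t s n + ∑ n' : N, E t n' n
      = ∑ n' : N, (OD t n' n : ℝ)) ∧
  -- (3) outward flow assignment
  (∀ t n, ∑ s ∈ univ.filter (fun s => Nb s n), Fm t s n + ∑ n' : N, E t n n'
      = ∑ n' : N, (OD t n n' : ℝ)) ∧
  -- (4) zero net flow at each station
  (∀ t s, ∑ n ∈ univ.filter (fun n => Nb s n), (Fp t s n - Fm t s n) = 0) ∧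
  -- (5) unsatisfied trips correspond to actual trips
  (∀ t n n', E t n n' ≤ (OD t n n' : ℝ))

/-! The time periods decouple. In one period, put the unsatisfied trips, the flows to and from the
stations and one slack entry per station into a square matrix indexed by nodes and stations: by the
zero net flow condition, the capacity constraint of a station splits into two equal halves, one for
its row and one for its column, so (OP) becomes a capacitated transportation problem whose data are
integral because capacities are even. A linear functional attains its minimum over the compact
transportation polytope at an extreme point. Extreme points are integral: with integral margins, a
row or column never contains exactly one fractional entry, so a dimension count yields a nonzero
matrix with vanishing margins supported on the fractional entries, and moving along it in both
directions stays in the polytope. -/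

theorem two_mul_card_range_le {ι α : Type*} [Finite ι] {f : ι → α}
    (hf : ∀ i, ∃ j ≠ i, f j = f i) : 2 * Nat.card (Set.range f) ≤ Nat.card ι := by
  classical
  have := Fintype.ofFinite ι
  have fiber_card : ∀ a ∈ univ.image f, 2 ≤ #{i | f i = a} := by
    simp only [mem_image, mem_univ, true_and, forall_exists_index, forall_apply_eq_imp_iff]
    intro i
    obtain ⟨j, hji, hj⟩ := hf i
    exact one_lt_card.2 ⟨j, by simp [hj], i, by simp, hji⟩
  rw [← Set.image_univ, ← coe_univ, ← coe_image, Nat.card_coe_set_eq, Set.ncard_coe_finset,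
    Nat.card_eq_fintype_card]
  exact mul_card_image_le_card univ 2 fiber_card

theorem exists_ne_zero_mapDomain_eq_zero (K : Type*) {ι α β : Type*} [Field K] [Finite ι]
    [Nonempty ι] {f : ι → α} {g : ι → β} (hf : ∀ i, ∃ j ≠ i, f j = f i)
    (hg : ∀ i, ∃ j ≠ i, g j = g i) :
    ∃ D : ι →₀ K, D ≠ 0 ∧ D.mapDomain f = 0 ∧ D.mapDomain g = 0 := by
  -- There are at least as many unknowns `D i` as fibre equations, and these equations are
  -- dependent, because both families of fibre sums add up to the total mass of `D`.
  let f' := Set.rangeFactorization f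
  let g' := Set.rangeFactorization g
  let L : (ι →₀ K) →ₗ[K] (Set.range f →₀ K) × (Set.range g →₀ K) :=
    (Finsupp.lmapDomain K K f').prod (Finsupp.lmapDomain K K g')
  suffices not_injective : ¬ Function.Injective L by
    rw [← LinearMap.ker_eq_bot] at not_injective
    obtain ⟨D, hD, hD0⟩ := Submodule.exists_mem_ne_zero_of_ne_bot not_injective
    obtain ⟨hDf, hDg⟩ : D.mapDomain f' = 0 ∧ D.mapDomain g' = 0 := Prod.ext_iff.1 hD
    refine ⟨D, hD0, ?_, ?_⟩
    · rw [← Set.rangeFactorization_eq (f := f), Finsupp.mapDomain_comp, hDf, Finsupp.mapDomain_zero]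
    · rw [← Set.rangeFactorization_eq (f := g), Finsupp.mapDomain_comp, hDg, Finsupp.mapDomain_zero]
  intro hL
  have finrank_eq : Module.finrank K (ι →₀ K) =
      Module.finrank K ((Set.range f →₀ K) × (Set.range g →₀ K)) := by
    refine (LinearMap.finrank_le_finrank_of_injective hL).antisymm ?_
    have := Fintype.ofFinite ι
    have := Fintype.ofFinite (Set.range f)
    have := Fintype.ofFinite (Set.range g)
    have := two_mul_card_range_le hf
    have := two_mul_card_range_le hg
    simp only [Module.finrank_prod, Module.finrank_finsupp_self, ← Nat.card_eq_fintype_card]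
    omega
  obtain ⟨i⟩ := ‹Nonempty ι›
  obtain ⟨D, hD⟩ := (LinearMap.injective_iff_surjective_of_finrank_eq_finrank finrank_eq).1 hL
    (Finsupp.single (f' i) 1, 0)
  obtain ⟨hDf, hDg⟩ : D.mapDomain f' = Finsupp.single (f' i) 1 ∧ D.mapDomain g' = 0 :=
    Prod.ext_iff.1 hD
  have degree_eq_one := Finsupp.degree_mapDomain f' D
  have degree_eq_zero := Finsupp.degree_mapDomain g' D
  rw [hDf, Finsupp.degree_single] at degree_eq_one
  rw [hDg, map_zero, ← degree_eq_one] at degree_eq_zero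
  exact zero_ne_one degree_eq_zero

theorem exists_ne_zero_supported_sum_eq_zero (K : Type*) {R C : Type*} [Field K] [Fintype R]
    [Fintype C] {P : R → C → Prop} (hP : ∃ r c, P r c)
    (hrow : ∀ r c, P r c → ∃ c' ≠ c, P r c') (hcol : ∀ r c, P r c → ∃ r' ≠ r, P r' c) :
    ∃ D : R → C → K, D ≠ 0 ∧ (∀ r c, ¬ P r c → D r c = 0) ∧
      (∀ r, ∑ c, D r c = 0) ∧ ∀ c, ∑ r, D r c = 0 := by
  classical
  obtain ⟨r₀, c₀, h₀⟩ := hP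
  let ι := {p : R × C // P p.1 p.2}
  have : Nonempty ι := ⟨⟨(r₀, c₀), h₀⟩⟩
  have hrow' (p : ι) : ∃ q ≠ p, q.1.1 = p.1.1 := by
    obtain ⟨c', hne, h'⟩ := hrow _ _ p.2
    exact ⟨⟨(p.1.1, c'), h'⟩, fun h => hne (congrArg (·.1.2) h), rfl⟩
  have hcol' (p : ι) : ∃ q ≠ p, q.1.2 = p.1.2 := by
    obtain ⟨r', hne, h'⟩ := hcol _ _ p.2
    exact ⟨⟨(r', p.1.2), h'⟩, fun h => hne (congrArg (·.1.1) h), rfl⟩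
  obtain ⟨D, hD, hfst, hsnd⟩ := exists_ne_zero_mapDomain_eq_zero K hrow' hcol'
  let D' : R × C →₀ K := D.mapDomain Subtype.val
  have hfst' : D'.mapDomain Prod.fst = 0 := by rw [← hfst, ← Finsupp.mapDomain_comp]; rfl
  have hsnd' : D'.mapDomain Prod.snd = 0 := by rw [← hsnd, ← Finsupp.mapDomain_comp]; rfl
  refine ⟨fun r c => D' (r, c), fun h0 => hD ?_, fun r c hrc => ?_, fun r => ?_, fun c => ?_⟩
  · refine Finsupp.mapDomain_injective Subtype.val_injective ?_
    ext ⟨r, c⟩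
    simpa using congrFun₂ h0 r c
  · exact Finsupp.mapDomain_of_notMem_range _ _ (by simpa using hrc)
  · simpa [Finsupp.mapDomain, Finsupp.sum_fintype, Fintype.sum_prod_type, Finsupp.single_apply]
      using DFunLike.congr_fun hfst' r
  · simpa [Finsupp.mapDomain, Finsupp.sum_fintype, Fintype.sum_prod_type, Finsupp.single_apply]
      using DFunLike.congr_fun hsnd' c

theorem eq_zero_of_add_mem_of_sub_mem_of_mem_extremePoints {𝕜 V : Type*} [Field 𝕜] [LinearOrder 𝕜]
    [IsStrictOrderedRing 𝕜] [AddCommGroup V] [Module 𝕜 V] {A : Set V} {x d : V}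
    (hx : x ∈ A.extremePoints 𝕜) (hadd : x + d ∈ A) (hsub : x - d ∈ A) : d = 0 := by
  have x_mem : x ∈ openSegment 𝕜 (x + d) (x - d) :=
    ⟨1 / 2, 1 / 2, by norm_num, by norm_num, by norm_num, by module⟩
  simpa using hx.2 hadd hsub x_mem

theorem exists_mem_extremePoints_isMinOn {V : Type*} [AddCommGroup V] [Module ℝ V]
    [TopologicalSpace V] [T2Space V] [IsTopologicalAddGroup V] [ContinuousSMul ℝ V]
    [LocallyConvexSpace ℝ V] {A : Set V} (hA : IsCompact A) (hne : A.Nonempty)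
    (l : V →L[ℝ] ℝ) : ∃ x ∈ A.extremePoints ℝ, IsMinOn l A x := by
  have face_exposed : IsExposed ℝ A ((-l).toExposed A) := ContinuousLinearMap.toExposed.isExposed
  have face_nonempty : ((-l).toExposed A).Nonempty := by
    obtain ⟨x, hxA, hx⟩ := hA.exists_isMinOn hne l.continuous.continuousOn
    exact ⟨x, hxA, fun y hy => neg_le_neg (hx hy)⟩
  obtain ⟨x, hx⟩ := (face_exposed.isCompact hA).extremePoints_nonempty face_nonempty
  exact ⟨x, face_exposed.isExtreme.extremePoints_subset_extremePoints hx,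
    fun y hy => neg_le_neg_iff.1 (hx.1.2 y hy)⟩

theorem exists_ne_notMem_of_sum_mem {ι M σ : Type*} [Fintype ι] [AddCommGroup M] [SetLike σ M]
    [AddSubgroupClass σ M] {G : σ} {x : ι → M} (hsum : ∑ i, x i ∈ G) {i : ι} (hi : x i ∉ G) :
    ∃ j ≠ i, x j ∉ G := by
  classical
  contrapose! hi
  rw [Fintype.sum_eq_add_sum_compl i] at hsum
  exact (add_mem_cancel_right (sum_mem fun j hj => hi j (by simpa using hj))).1 hsum

theorem eventually_add_smul_mem_Icc {R C : Type*} [Finite R] [Finite C]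
    {X D L U : R → C → ℝ} (hX : X ∈ Set.Icc L U)
    (hD : ∀ r c, D r c ≠ 0 → L r c < X r c ∧ X r c < U r c) :
    ∀ᶠ ε : ℝ in nhds 0, X + ε • D ∈ Set.Icc L U := by
  have entry_mem : ∀ r c, ∀ᶠ ε : ℝ in nhds 0, (X + ε • D) r c ∈ Set.Icc (L r c) (U r c) := by
    intro r c
    by_cases h : D r c = 0
    · simpa [h] using ⟨hX.1 r c, hX.2 r c⟩
    · have tendsto : Filter.Tendsto (fun ε : ℝ => (X + ε • D) r c) (nhds 0) (nhds (X r c)) := by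
        refine Continuous.tendsto' ?_ _ _ (by simp)
        simp only [Pi.add_apply, Pi.smul_apply]
        fun_prop
      exact tendsto.eventually (Icc_mem_nhds (hD r c h).1 (hD r c h).2)
  simp only [← Filter.eventually_all] at entry_mem
  filter_upwards [entry_mem] with ε hε
  exact ⟨fun r c => (hε r c).1, fun r c => (hε r c).2⟩

/-- The integers inside `ℝ`; as a subring, so that sums of integral reals are integral. -/
abbrev intSubring : Subring ℝ := (Int.castRingHom ℝ).range

section TransportationPolytope

variable {R C : Type*} [Fintype R] [Fintype C]

/-- The capacitated transportation polytope: matrices with row sums `a`, column sums `b` and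
entries between those of `L` and `U`. -/
def transportationPolytope (a : R → ℝ) (b : C → ℝ) (L U : R → C → ℝ) : Set (R → C → ℝ) :=
  {X | X ∈ Set.Icc L U ∧ (∀ r, ∑ c, X r c = a r) ∧ ∀ c, ∑ r, X r c = b c}

theorem isCompact_transportationPolytope (a : R → ℝ) (b : C → ℝ) (L U : R → C → ℝ) :
    IsCompact (transportationPolytope a b L U) := by
  simp only [transportationPolytope, Set.ofPred_and, Set.ofPred_forall]
  refine isCompact_Icc.inter_right (IsClosed.inter ?_ ?_)
  · exact isClosed_iInter fun r => isClosed_eq (by fun_prop) continuous_const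
  · exact isClosed_iInter fun c => isClosed_eq (by fun_prop) continuous_const

theorem mem_intSubring_of_mem_extremePoints {a : R → ℝ} {b : C → ℝ} {L U X : R → C → ℝ}
    (ha : ∀ r, a r ∈ intSubring) (hb : ∀ c, b c ∈ intSubring)
    (hL : ∀ r c, L r c ∈ intSubring) (hU : ∀ r c, U r c ∈ intSubring)
    (hX : X ∈ (transportationPolytope a b L U).extremePoints ℝ) :
    ∀ r c, X r c ∈ intSubring := by
  obtain ⟨hIcc, hrow, hcol⟩ := hX.1
  by_contra! hfrac
  obtain ⟨D, hD0, hDfrac, hDrow, hDcol⟩ := exists_ne_zero_supported_sum_eq_zero ℝ hfrac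
    (fun r c => exists_ne_notMem_of_sum_mem (hrow r ▸ ha r))
    (fun r c => exists_ne_notMem_of_sum_mem (hcol c ▸ hb c))
  have strict (r c) (h : D r c ≠ 0) : L r c < X r c ∧ X r c < U r c := by
    have notMem : X r c ∉ intSubring := fun mem => h (hDfrac r c (not_not.2 mem))
    exact ⟨(hIcc.1 r c).lt_of_ne fun h => notMem (h ▸ hL r c),
      (hIcc.2 r c).lt_of_ne fun h => notMem (h ▸ hU r c)⟩
  have eventually_mem := eventually_add_smul_mem_Icc hIcc strict
  have eventually_mem_neg := (continuous_neg.tendsto' (0 : ℝ) 0 neg_zero).eventually eventually_mem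
  obtain ⟨ε, ⟨hadd, hsub⟩, hε : ε ≠ 0⟩ :=
    (((eventually_mem.and eventually_mem_neg).filter_mono nhdsWithin_le_nhds).and
      self_mem_nhdsWithin).exists (f := nhdsWithin (0 : ℝ) {0}ᶜ)
  rw [neg_smul, ← sub_eq_add_neg] at hsub
  have hεD : ε • D = 0 := eq_zero_of_add_mem_of_sub_mem_of_mem_extremePoints hX
    ⟨hadd, by simp [sum_add_distrib, ← mul_sum, hrow, hDrow],
      by simp [sum_add_distrib, ← mul_sum, hcol, hDcol]⟩
    ⟨hsub, by simp [← mul_sum, hrow, hDrow], by simp [← mul_sum, hcol, hDcol]⟩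
  exact hD0 ((smul_eq_zero.1 hεD).resolve_left hε)

theorem exists_integral_isMinOn_transportationPolytope {a : R → ℝ} {b : C → ℝ} {L U : R → C → ℝ}
    (ha : ∀ r, a r ∈ intSubring) (hb : ∀ c, b c ∈ intSubring)
    (hL : ∀ r c, L r c ∈ intSubring) (hU : ∀ r c, U r c ∈ intSubring)
    (hne : (transportationPolytope a b L U).Nonempty) (l : (R → C → ℝ) →L[ℝ] ℝ) :
    ∃ Y ∈ transportationPolytope a b L U, (∀ r c, Y r c ∈ intSubring) ∧
      IsMinOn l (transportationPolytope a b L U) Y := by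
  obtain ⟨Y, hY, hmin⟩ := exists_mem_extremePoints_isMinOn
    (isCompact_transportationPolytope a b L U) hne l
  exact ⟨Y, hY.1, mem_intSubring_of_mem_extremePoints ha hb hL hU hY, hmin⟩

end TransportationPolytope

theorem sum_filter_of_forall_not_eq_zero {ι M : Type*} [Fintype ι] [AddCommMonoid M]
    {p : ι → Prop} [DecidablePred p] {f : ι → M} (h : ∀ i, ¬ p i → f i = 0) :
    ∑ i with p i, f i = ∑ i, f i :=
  sum_filter_of_ne fun i _ => not_imp_comm.1 (h i)

section Period

variable {N S : Type*} [Fintype N] [Fintype S] [DecidableEq S] (Nb : S → N → Prop)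
  [∀ s n, Decidable (Nb s n)] (OD : N → N → ℕ) (half : S → ℕ)

/-- Capacities of the transportation problem of one time period, with trip matrix `OD` and station
capacities `2 * half s`. Rows are trip origins and stations, columns are trip destinations and
stations; the station-to-station block carries slack on its diagonal only. -/
def periodBound : N ⊕ S → N ⊕ S → ℕ
  | .inl n, .inl n' => OD n n'
  | .inl n, .inr s => if Nb s n then half s else 0
  | .inr s, .inl n => if Nb s n then half s else 0
  | .inr s, .inr s' => if s = s' then half s else 0

/-- The constraints of (OP) in one time period, as a transportation polytope: row `n` distributes
the trips leaving `n`, column `n` collects those arriving, and the row and the column of a station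
`s` both have total `half s`. -/
def periodPolytope : Set (N ⊕ S → N ⊕ S → ℝ) :=
  transportationPolytope (Sum.elim (fun n => ∑ n', (OD n n' : ℝ)) fun s => half s)
    (Sum.elim (fun n => ∑ n', (OD n' n : ℝ)) fun s => half s) 0
    fun i j => periodBound Nb OD half i j

/-- The point of `periodPolytope` that encodes flows `Fp`, `Fm` and unsatisfied trips `E`; the slack
of a station is what its outward flow leaves unused of `half s`. -/
def periodMatrix (Fp Fm : S → N → ℝ) (E : N → N → ℝ) : N ⊕ S → N ⊕ S → ℝ
  | .inl n, .inl n' => E n n'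
  | .inl n, .inr s => Fm s n
  | .inr s, .inl n => Fp s n
  | .inr s, .inr s' => if s = s' then half s - ∑ n, Fm s n else 0

variable {Nb OD half}

theorem exists_integral_isMinOn_periodPolytope (hne : (periodPolytope Nb OD half).Nonempty) :
    ∃ Y ∈ periodPolytope Nb OD half, (∀ i j, Y i j ∈ intSubring) ∧
      ∀ X ∈ periodPolytope Nb OD half, ∑ n, ∑ n', Y (.inl n) (.inl n') ≤
        ∑ n, ∑ n', X (.inl n) (.inl n') := by
  let trips : (N ⊕ S → N ⊕ S → ℝ) →L[ℝ] ℝ :=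
    ∑ n : N, ∑ n' : N,
      (ContinuousLinearMap.proj (φ := fun _ : N ⊕ S => ℝ) (Sum.inl n')).comp
        (ContinuousLinearMap.proj (Sum.inl n))
  obtain ⟨Y, hY, integral, hmin⟩ := exists_integral_isMinOn_transportationPolytope
    (Sum.forall.2 ⟨fun n => sum_mem fun _ _ => natCast_mem _ _, fun s => natCast_mem _ _⟩)
    (Sum.forall.2 ⟨fun n => sum_mem fun _ _ => natCast_mem _ _, fun s => natCast_mem _ _⟩)
    (fun _ _ => zero_mem _) (fun _ _ => natCast_mem _ _) hne trips
  exact ⟨Y, hY, integral, fun X hX => by simpa [trips] using hmin hX⟩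

section Blocks

variable {Y : N ⊕ S → N ⊕ S → ℝ} (hY : Y ∈ periodPolytope Nb OD half)
include hY

theorem inflow_eq_zero_of_mem_periodPolytope {s : S} {n : N} (hs : ¬ Nb s n) :
    Y (.inr s) (.inl n) = 0 :=
  le_antisymm (by simpa [periodBound, hs] using hY.1.2 (.inr s) (.inl n)) (hY.1.1 _ _)

theorem outflow_eq_zero_of_mem_periodPolytope {s : S} {n : N} (hs : ¬ Nb s n) :
    Y (.inl n) (.inr s) = 0 :=
  le_antisymm (by simpa [periodBound, hs] using hY.1.2 (.inl n) (.inr s)) (hY.1.1 _ _)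

theorem slack_eq_zero_of_mem_periodPolytope {s s' : S} (hs : s ≠ s') : Y (.inr s) (.inr s') = 0 :=
  le_antisymm (by simpa [periodBound, hs] using hY.1.2 (.inr s) (.inr s')) (hY.1.1 _ _)

theorem sum_inflow_add_slack_of_mem_periodPolytope (s : S) :
    ∑ n, Y (.inr s) (.inl n) + Y (.inr s) (.inr s) = half s := by
  rw [← Fintype.sum_eq_single s fun s' hs => slack_eq_zero_of_mem_periodPolytope hY hs.symm,
    ← Fintype.sum_sum_type]
  exact hY.2.1 (.inr s)

theorem sum_outflow_add_slack_of_mem_periodPolytope (s : S) :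
    ∑ n, Y (.inl n) (.inr s) + Y (.inr s) (.inr s) = half s := by
  rw [← Fintype.sum_eq_single (f := fun s' => Y (.inr s') (.inr s)) s
    fun s' hs => slack_eq_zero_of_mem_periodPolytope hY hs,
    ← Fintype.sum_sum_type fun i => Y i (.inr s)]
  exact hY.2.2 (.inr s)

end Blocks

end Period

section Feasible

variable {T N S : Type*} [Fintype N] [Fintype S] {Nb : S → N → Prop}
  [∀ s n, Decidable (Nb s n)] {v : T → ℕ} {OD : T → N → N → ℕ} {z : S → ℕ} {Fp Fm : T → S → N → ℝ}
  {E : T → N → N → ℝ}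

theorem OPFeasible.unsatisfied_all :
    OPFeasible Nb v OD z (fun _ _ _ => 0) (fun _ _ _ => 0) (fun t n n' => OD t n n') := by
  refine ⟨by simp, by simp, by simp, by simp, by simp, fun t s => ?_, by simp, by simp, by simp,
    by simp⟩
  simp only [add_zero, sum_const_zero]
  positivity

theorem OPFeasible.sum_inflow_eq_sum_outflow (hF : OPFeasible Nb v OD z Fp Fm E) (t : T) (s : S) :
    ∑ n, Fp t s n = ∑ n, Fm t s n := by
  obtain ⟨-, -, -, hFp, hFm, -, -, -, balance, -⟩ := hF
  have := balance t s
  rwa [sum_sub_distrib, sum_filter_of_forall_not_eq_zero (hFp t s),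
    sum_filter_of_forall_not_eq_zero (hFm t s), sub_eq_zero] at this

theorem OPFeasible.sum_outflow_le (hF : OPFeasible Nb v OD z Fp Fm E) {half : ℕ} {t : T} {s : S}
    (hhalf : v t * z s = half + half) : ∑ n, Fm t s n ≤ half := by
  have balance := hF.sum_inflow_eq_sum_outflow t s
  obtain ⟨-, -, -, hFp, hFm, capacity, -⟩ := hF
  have capacity := capacity t s
  rw [sum_add_distrib, sum_filter_of_forall_not_eq_zero (hFp t s),
    sum_filter_of_forall_not_eq_zero (hFm t s), balance, ← Nat.cast_mul, hhalf,
    Nat.cast_add] at capacity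
  linarith

variable [DecidableEq S] {half : T → S → ℕ}

theorem OPFeasible.periodMatrix_mem_Icc (hF : OPFeasible Nb v OD z Fp Fm E)
    (hhalf : ∀ t s, v t * z s = half t s + half t s) (t : T) :
    periodMatrix (half t) (Fp t) (Fm t) (E t) ∈
      Set.Icc 0 (fun i j => (periodBound Nb (OD t) (half t) i j : ℝ)) := by
  have out_le (s : S) := hF.sum_outflow_le (hhalf t s)
  have in_le (s : S) := (hF.sum_inflow_eq_sum_outflow t s).trans_le (out_le s)
  obtain ⟨Fp_nonneg, Fm_nonneg, E_nonneg, hFp, hFm, -, -, -, -, E_le⟩ := hF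
  have Fp_le (s n) : Fp t s n ≤ half t s :=
    (single_le_sum (fun n _ => Fp_nonneg t s n) (mem_univ n)).trans (in_le s)
  have Fm_le (s n) : Fm t s n ≤ half t s :=
    (single_le_sum (fun n _ => Fm_nonneg t s n) (mem_univ n)).trans (out_le s)
  have sum_Fm_nonneg (s) : 0 ≤ ∑ n, Fm t s n := sum_nonneg fun n _ => Fm_nonneg t s n
  constructor
  · rintro (n | s) (n' | s') <;> simp only [periodMatrix, Pi.zero_apply]
    exacts [E_nonneg t n n', Fm_nonneg t s' n, Fp_nonneg t s n',
      ite_nonneg (sub_nonneg.2 (out_le s)) le_rfl]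
  · rintro (n | s) (n' | s') <;> simp only [periodMatrix, periodBound, Nat.cast_ite,
      Nat.cast_zero]
    · exact E_le t n n'
    · split_ifs with hs
      exacts [Fm_le s' n, (hFm t s' n hs).le]
    · split_ifs with hs
      exacts [Fp_le s n', (hFp t s n' hs).le]
    · split_ifs
      exacts [sub_le_self _ (sum_Fm_nonneg s), le_rfl]

theorem OPFeasible.periodMatrix_mem (hF : OPFeasible Nb v OD z Fp Fm E)
    (hhalf : ∀ t s, v t * z s = half t s + half t s) (t : T) :
    periodMatrix (half t) (Fp t) (Fm t) (E t) ∈ periodPolytope Nb (OD t) (half t) := by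
  have mem_Icc := hF.periodMatrix_mem_Icc hhalf t
  have balance := hF.sum_inflow_eq_sum_outflow t
  obtain ⟨-, -, -, hFp, hFm, -, inflow, outflow, -⟩ := hF
  refine ⟨mem_Icc, ?_, ?_⟩
  · rintro (n | s) <;> simp only [Fintype.sum_sum_type, periodMatrix, Sum.elim_inl, Sum.elim_inr]
    · rw [← outflow t n, sum_filter_of_forall_not_eq_zero fun s => hFm t s n, add_comm]
    · simp [balance]
  · rintro (n | s) <;> simp only [Fintype.sum_sum_type, periodMatrix, Sum.elim_inl, Sum.elim_inr]
    · rw [← inflow t n, sum_filter_of_forall_not_eq_zero fun s => hFp t s n, add_comm]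
    · simp

theorem OPFeasible.of_mem_periodPolytope {Y : T → N ⊕ S → N ⊕ S → ℝ}
    (hY : ∀ t, Y t ∈ periodPolytope Nb (OD t) (half t))
    (hhalf : ∀ t s, v t * z s = half t s + half t s) :
    OPFeasible Nb v OD z (fun t s n => Y t (.inr s) (.inl n)) (fun t s n => Y t (.inl n) (.inr s))
      (fun t n n' => Y t (.inl n) (.inl n')) := by
  have in_zero t s n (hs : ¬ Nb s n) := inflow_eq_zero_of_mem_periodPolytope (hY t) hs
  have out_zero t s n (hs : ¬ Nb s n) := outflow_eq_zero_of_mem_periodPolytope (hY t) hs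
  have in_slack t s := sum_inflow_add_slack_of_mem_periodPolytope (hY t) s
  have out_slack t s := sum_outflow_add_slack_of_mem_periodPolytope (hY t) s
  have nonneg t i j : 0 ≤ Y t i j := (hY t).1.1 i j
  refine ⟨fun _ _ _ => nonneg _ _ _, fun _ _ _ => nonneg _ _ _, fun _ _ _ => nonneg _ _ _,
    in_zero, out_zero, fun t s => ?_, fun t n => ?_, fun t n => ?_, fun t s => ?_,
    fun t n n' => (hY t).1.2 (.inl n) (.inl n')⟩
  · rw [sum_add_distrib, sum_filter_of_forall_not_eq_zero (in_zero t s),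
      sum_filter_of_forall_not_eq_zero (out_zero t s), ← Nat.cast_mul, hhalf, Nat.cast_add]
    linarith [in_slack t s, out_slack t s, nonneg t (.inr s) (.inr s)]
  · rw [sum_filter_of_forall_not_eq_zero fun s => in_zero t s n, add_comm,
      ← Fintype.sum_sum_type fun i => Y t i (.inl n)]
    exact (hY t).2.2 (.inl n)
  · rw [sum_filter_of_forall_not_eq_zero fun s => out_zero t s n, add_comm, ← Fintype.sum_sum_type]
    exact (hY t).2.1 (.inl n)
  · rw [sum_sub_distrib, sum_filter_of_forall_not_eq_zero (in_zero t s),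
      sum_filter_of_forall_not_eq_zero (out_zero t s)]
    linarith [in_slack t s, out_slack t s]

end Feasible

theorem OP_has_integral_optimal_solution_general
    {T N S : Type*} [Fintype T] [Fintype N] [Fintype S]
    (Nb : S → N → Prop) [∀ s n, Decidable (Nb s n)]
    (v : T → ℕ) (OD : T → N → N → ℕ) (z : S → ℕ) (hcap : ∀ t s, Even (v t * z s)) :
    ∃ Fp Fm : T → S → N → ℝ, ∃ E : T → N → N → ℝ,
      OPFeasible Nb v OD z Fp Fm E ∧
      (∀ t s n, ∃ k : ℤ, Fp t s n = k) ∧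
      (∀ t s n, ∃ k : ℤ, Fm t s n = k) ∧
      (∀ t n n', ∃ k : ℤ, E t n n' = k) ∧
      (∀ Fp' Fm' : T → S → N → ℝ, ∀ E' : T → N → N → ℝ,
        OPFeasible Nb v OD z Fp' Fm' E' →
          ∑ t : T, ∑ n : N, ∑ n' : N, E t n n' ≤ ∑ t : T, ∑ n : N, ∑ n' : N, E' t n n') := by
  classical
  choose half hhalf using hcap
  have polytope_nonempty (t : T) : (periodPolytope Nb (OD t) (half t)).Nonempty :=
    ⟨_, OPFeasible.unsatisfied_all.periodMatrix_mem hhalf t⟩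
  choose Y hY integral hmin using fun t =>
    exists_integral_isMinOn_periodPolytope (polytope_nonempty t)
  have exists_int (t : T) (i j : N ⊕ S) : ∃ k : ℤ, Y t i j = k := by
    obtain ⟨k, hk⟩ := integral t i j
    exact ⟨k, hk.symm⟩
  exact ⟨_, _, _, OPFeasible.of_mem_periodPolytope hY hhalf, fun t s n => exists_int _ _ _,
    fun t s n => exists_int _ _ _, fun t n n' => exists_int _ _ _,
    fun Fp' Fm' E' hF => sum_le_sum fun t _ => hmin t _ (hF.periodMatrix_mem hhalf t)⟩

/-- Property 1 of the paper. For every fixed integer vector `z` of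
parking-space pairs, the linear program (OP) has an integral optimal solution: there is a
feasible solution all of whose entries are integers whose objective value
`∑ t, ∑ n n', E t n n'` is at most the objective value of every feasible solution. -/
theorem OP_has_integral_optimal_solution
    {T N S : Type*} [Fintype T] [Fintype N] [Fintype S]
    (Nb : S → N → Prop) [∀ s n, Decidable (Nb s n)]
    (v : T → ℕ) (hv_pos : ∀ t, 0 < v t) (hv_even : ∀ t, Even (v t))
    (OD : T → N → N → ℕ) (z : S → ℕ) :
    ∃ Fp Fm : T → S → N → ℝ, ∃ E : T → N → N → ℝ,
      OPFeasible Nb v OD z Fp Fm E ∧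
      (∀ t s n, ∃ k : ℤ, Fp t s n = k) ∧
      (∀ t s n, ∃ k : ℤ, Fm t s n = k) ∧
      (∀ t n n', ∃ k : ℤ, E t n n' = k) ∧
      (∀ Fp' Fm' : T → S → N → ℝ, ∀ E' : T → N → N → ℝ,
        OPFeasible Nb v OD z Fp' Fm' E' →
          ∑ t : T, ∑ n : N, ∑ n' : N, E t n n' ≤ ∑ t : T, ∑ n : N, ∑ n' : N, E' t n n') := by
  exact OP_has_integral_optimal_solution_general Nb v OD z fun t s => (hv_even t).mul_right (z s)
end

section
/- A matrix A with entries in {−1, 0, 1} is totally unimodular if and only if every collection J of columns of A can be split into two parts J₁ and J₂ such that the sum of the columns in J₁ minus the sum of the columns in J₂ is a vector all of whose entries equal 0, 1, or −1. -/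
/-!
If `A` is totally unimodular, then so is `M`, obtained by stacking `A` on the identity matrix. With
`h = (1/2, …, 1/2)`, the polytope `⌊M h⌋ ≤ M x ≤ ⌈M h⌉` has integral vertices (Hoffman–Kruskal): the
constraints tight at a vertex have trivial kernel, and Cramer's rule for them divides only by
`±1`. Any vertex `z` is a `0/1` vector, and the signs `2 z - 1` split the columns equitably.

Conversely (Ghouila-Houri), let `B` be a square submatrix with `det B ≠ 0` all of whose proper
minors are `0` or `±1`. A column `b` of its adjugate has entries `0`, `±1` and satisfies
`B b = det B • e`, with `e` a standard basis vector. Splitting the support of `b` gives `y` with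
`|y| = |b|` and `B y` bounded by `1`. As `y ≡ b` modulo `2`, the vector `B y` vanishes off the
support of `e`, so `B y = c • e` with `|c| ≤ 1`. Hence `det B • y = c • b` and `|det B| = |c| ≤ 1`.
-/

open Matrix Set Topology

section SignEntries

variable {m n R : Type*}

theorem intCast_mem_range_signType_cast [AddGroupWithOne R] [CharZero R] {a : ℤ} :
    (a : R) ∈ range (SignType.cast : SignType → R) ↔
      a ∈ range (SignType.cast : SignType → ℤ) := by
  simp only [mem_range, ← SignType.intCast_cast (α := R), Int.cast_inj]

theorem int_mem_range_signType_cast_iff_abs_le_one {a : ℤ} :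
    a ∈ range (SignType.cast : SignType → ℤ) ↔ |a| ≤ 1 := by
  rw [SignType.range_eq, abs_le]
  simp only [SignType.zero_eq_zero, SignType.neg_eq_neg_one, SignType.pos_eq_one,
    SignType.coe_zero, SignType.coe_neg_one, SignType.coe_one, mem_insert_iff, mem_singleton_iff]
  omega

theorem mem_range_signType_cast_iff [Zero R] [One R] [Neg R] {x : R} :
    x ∈ range (SignType.cast : SignType → R) ↔ x = -1 ∨ x = 0 ∨ x = 1 := by
  simp [SignType.range_eq, or_left_comm]

theorem range_signType_cast_subset_range_intCast [AddGroupWithOne R] :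
    range (SignType.cast : SignType → R) ⊆ range (Int.cast : ℤ → R) :=
  range_subset_iff.2 fun s => ⟨s, s.intCast_cast⟩

theorem exists_map_intCast_eq [IntCast R] {A : Matrix m n R}
    (hA : ∀ i j, A i j ∈ range (Int.cast : ℤ → R)) :
    ∃ B : Matrix m n ℤ, B.map Int.cast = A := by
  choose B hB using hA
  exact ⟨of B, Matrix.ext hB⟩

theorem isTotallyUnimodular_map_intCast_iff [CommRing R] [CharZero R] {A : Matrix m n ℤ} :
    (A.map (Int.cast : ℤ → R)).IsTotallyUnimodular ↔ A.IsTotallyUnimodular := by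
  simp only [IsTotallyUnimodular, submatrix_map, ← Int.cast_det, intCast_mem_range_signType_cast]

theorem finite_range_of_isTotallyUnimodular [CommRing R] [Finite n] {A : Matrix m n R}
    (hA : A.IsTotallyUnimodular) : (range A).Finite :=
  (Finite.pi' fun _ => finite_range (SignType.cast : SignType → R)).subset
    (range_subset_iff.2 hA.apply)

end SignEntries

theorem det_mul_mem_range_intCast_of_mulVec {n R : Type*} [CommRing R] [Fintype n] [DecidableEq n]
    {A : Matrix n n R} {x : n → R} (hA : ∀ i j, A i j ∈ range (Int.cast : ℤ → R))
    (hx : ∀ i, (A *ᵥ x) i ∈ range (Int.cast : ℤ → R)) (j : n) :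
    A.det * x j ∈ range (Int.cast : ℤ → R) := by
  obtain ⟨B, rfl⟩ := exists_map_intCast_eq hA
  choose b hb using hx
  have hadj : (B.map (Int.cast : ℤ → R)).adjugate = B.adjugate.map Int.cast :=
    ((Int.castRingHom R).map_adjugate B).symm
  have hcramer : (B.map (Int.cast : ℤ → R)).det • x =
      B.adjugate.map Int.cast *ᵥ fun i => (b i : R) := by
    rw [funext hb, ← hadj, mulVec_mulVec, adjugate_mul, smul_mulVec, one_mulVec]
  refine ⟨(B.adjugate *ᵥ b) j, Eq.trans ?_ (congrFun hcramer j).symm⟩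
  simp [mulVec, dotProduct]

section Integrality

variable {m n : Type*} [Finite m] [Fintype n]

theorem exists_isUnit_submatrix_of_mulVec_injective {K : Type*} [Field K] [DecidableEq n]
    {A : Matrix m n K} (hA : Function.Injective A.mulVec) :
    ∃ f : n → m, IsUnit (A.submatrix f id) := by
  obtain ⟨κ, f, -, hspan, hli⟩ := exists_linearIndependent' K A.row
  have : Fintype κ := @Fintype.ofFinite _ hli.finite
  have hcard : Fintype.card n = Fintype.card κ := by
    rw [← finrank_span_eq_card hli, hspan, ← A.rank_eq_finrank_span_row, rank,
      LinearMap.finrank_range_of_inj (f := A.mulVecLin) hA, Module.finrank_fintype_fun_eq_card]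
  let e : n ≃ κ := Fintype.equivOfCardEq hcard
  exact ⟨f ∘ e, linearIndependent_rows_iff_isUnit.1 (hli.comp e e.injective)⟩

theorem mem_range_intCast_of_mulVec {K : Type*} [Field K] {A : Matrix m n K}
    (hA : A.IsTotallyUnimodular) (hinj : Function.Injective A.mulVec) {x : n → K}
    (hx : ∀ i, (A *ᵥ x) i ∈ range (Int.cast : ℤ → K)) (j : n) :
    x j ∈ range (Int.cast : ℤ → K) := by
  classical
  obtain ⟨f, hf⟩ := exists_isUnit_submatrix_of_mulVec_injective hinj
  have hsub := hA.submatrix f id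
  obtain ⟨z, hz⟩ := det_mul_mem_range_intCast_of_mulVec
    (fun i j => range_signType_cast_subset_range_intCast (hsub.apply i j)) (fun i => hx (f i)) j
  have hdet := (isTotallyUnimodular_iff_fintype _).1 hA n f id
  rcases mem_range_signType_cast_iff.1 hdet with h | h | h
  · exact ⟨-z, by simp [hz, h]⟩
  · exact absurd h ((isUnit_iff_isUnit_det _).1 hf).ne_zero
  · exact ⟨z, by simp [hz, h]⟩

theorem eq_zero_of_mem_extremePoints_of_mulVec_eq_zero {A : Matrix m n ℝ} {l u : m → ℝ}
    {x v : n → ℝ} (hx : x ∈ (A.mulVec ⁻¹' Icc l u).extremePoints ℝ)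
    (hv : ∀ i, (A *ᵥ x) i = l i ∨ (A *ᵥ x) i = u i → (A *ᵥ v) i = 0) : v = 0 := by
  have hmem (w : n → ℝ) : w ∈ A.mulVec ⁻¹' Icc l u ↔ ∀ i, (A *ᵥ w) i ∈ Icc (l i) (u i) := by
    simp [Pi.le_def, forall_and]
  have hsmall : ∀ᶠ t : ℝ in 𝓝 0, x + t • v ∈ A.mulVec ⁻¹' Icc l u := by
    simp only [hmem, Filter.eventually_all, mulVec_add, mulVec_smul, Pi.add_apply, Pi.smul_apply,
      smul_eq_mul]
    intro i
    have hi := (hmem x).1 hx.1 i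
    by_cases htight : (A *ᵥ x) i = l i ∨ (A *ᵥ x) i = u i
    · simpa [hv i htight] using hi
    · push Not at htight
      have hcont : ContinuousAt (fun t : ℝ => (A *ᵥ x) i + t * (A *ᵥ v) i) 0 := by fun_prop
      exact hcont.eventually_mem (by
        simpa using Icc_mem_nhds (hi.1.lt_of_ne' htight.1) (hi.2.lt_of_ne htight.2))
  have hsmall_neg : ∀ᶠ t : ℝ in 𝓝 0, x + (-t) • v ∈ A.mulVec ⁻¹' Icc l u :=
    (continuous_neg.tendsto' (0 : ℝ) 0 neg_zero).eventually hsmall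
  obtain ⟨t, ⟨hpos, hneg⟩, ht⟩ :=
    (((hsmall.and hsmall_neg).filter_mono nhdsWithin_le_nhds).and
      (self_mem_nhdsWithin (s := Ioi (0 : ℝ)))).exists
  have hmid : x ∈ openSegment ℝ (x + t • v) (x + (-t) • v) :=
    ⟨1 / 2, 1 / 2, by norm_num, by norm_num, by norm_num, by module⟩
  have : t • v = 0 := by simpa using hx.2 hpos hneg hmid
  exact (smul_eq_zero.1 this).resolve_left ht.ne'

theorem mem_range_intCast_of_mem_extremePoints {A : Matrix m n ℝ} (hA : A.IsTotallyUnimodular)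
    {l u : m → ℤ} {x : n → ℝ}
    (hx : x ∈ (A.mulVec ⁻¹' Icc (fun i => (l i : ℝ)) (fun i => (u i : ℝ))).extremePoints ℝ)
    (j : n) : x j ∈ range (Int.cast : ℤ → ℝ) := by
  let tight := {i // (A *ᵥ x) i = l i ∨ (A *ᵥ x) i = u i}
  let T : Matrix tight n ℝ := A.submatrix Subtype.val id
  have hinj : Function.Injective T.mulVec := by
    refine (injective_iff_map_eq_zero T.mulVecLin).2 fun v hv => ?_
    exact eq_zero_of_mem_extremePoints_of_mulVec_eq_zero hx fun i hi => congrFun hv ⟨i, hi⟩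
  have hint : ∀ i, (T *ᵥ x) i ∈ range (Int.cast : ℤ → ℝ) := fun i =>
    i.2.elim (fun h => ⟨l i, h.symm⟩) fun h => ⟨u i, h.symm⟩
  exact mem_range_intCast_of_mulVec (hA.submatrix _ _) hinj hint j

theorem exists_int_abs_mulVec_sub_lt_one {A : Matrix m n ℝ} (hA : A.IsTotallyUnimodular)
    (hinj : Function.Injective A.mulVec) (x : n → ℝ) :
    ∃ z : n → ℤ, ∀ i, |(A *ᵥ fun j => (z j : ℝ)) i - (A *ᵥ x) i| < 1 := by
  let P := A.mulVec ⁻¹' Icc (fun i => (⌊(A *ᵥ x) i⌋ : ℝ)) (fun i => (⌈(A *ᵥ x) i⌉ : ℝ))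
  have hcompact : IsCompact P :=
    (LinearMap.isClosedEmbedding_of_injective (f := A.mulVecLin)
      (LinearMap.ker_eq_bot.2 hinj)).isCompact_preimage isCompact_Icc
  have hx : x ∈ P := ⟨fun i => Int.floor_le _, fun i => Int.le_ceil _⟩
  obtain ⟨v, hv⟩ := hcompact.extremePoints_nonempty ⟨x, hx⟩
  choose z hz using mem_range_intCast_of_mem_extremePoints hA hv
  obtain rfl : (fun j => (z j : ℝ)) = v := funext hz
  refine ⟨z, fun i => abs_lt.2 ⟨?_, ?_⟩⟩
  · linarith [hv.1.1 i, Int.sub_one_lt_floor ((A *ᵥ x) i)]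
  · linarith [hv.1.2 i, Int.ceil_lt_add_one ((A *ᵥ x) i)]

end Integrality

section Signing

variable {m n m' n' R : Type*}

/-- The columns of `A` indexed by `J` can be given signs so that their signed sum has all entries in
`{0, 1, -1}`. A signing `ε` encodes the split of `J` into `{j ∈ J | ε j = 1}` and
`{j ∈ J | ε j = -1}`; only its values on `J` matter. -/
def HasEquitableSigning [Ring R] (A : Matrix m n R) (J : Finset n) : Prop :=
  ∃ ε : n → ℤˣ, ∀ i, ∑ j ∈ J, ε j • A i j ∈ range (SignType.cast : SignType → R)

namespace HasEquitableSigning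

variable [Ring R] {A : Matrix m n R} {J : Finset n}

theorem submatrix (f : m' → m) {g : n' ↪ n} {K : Finset n'}
    (h : HasEquitableSigning A (K.map g)) : HasEquitableSigning (A.submatrix f g) K := by
  obtain ⟨ε, hε⟩ := h
  exact ⟨ε ∘ g, fun i => by simpa using hε (f i)⟩

theorem of_range_subset {B : Matrix m' n R} (hAB : range A ⊆ range B)
    (h : HasEquitableSigning B J) : HasEquitableSigning A J := by
  obtain ⟨ε, hε⟩ := h
  refine ⟨ε, fun i => ?_⟩
  obtain ⟨i', hi'⟩ := hAB (mem_range_self i)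
  exact hi' ▸ hε i'

theorem of_submatrix_coe (h : HasEquitableSigning (A.submatrix id ((↑) : J → n)) Finset.univ) :
    HasEquitableSigning A J := by
  obtain ⟨ε, hε⟩ := h
  refine ⟨Function.extend (↑) ε 1, fun i => ?_⟩
  simpa [← Finset.sum_coe_sort J, Subtype.val_injective.extend_apply] using hε i

theorem apply_mem_range_signType_cast {j : n} (h : HasEquitableSigning A {j}) (i : m) :
    A i j ∈ range (SignType.cast : SignType → R) := by
  obtain ⟨ε, hε⟩ := h
  have hi := hε i
  rw [Finset.sum_singleton] at hi
  rcases Int.units_eq_one_or (ε j) with hj | hj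
  · simpa [hj] using hi
  · rw [hj, Units.neg_smul, one_smul] at hi
    obtain ⟨s, hs⟩ := hi
    exact ⟨-s, by rw [SignType.coe_neg, hs, neg_neg]⟩

end HasEquitableSigning

theorem hasEquitableSigning_map_intCast_iff [Ring R] [CharZero R] {A : Matrix m n ℤ}
    {J : Finset n} :
    HasEquitableSigning (A.map (Int.cast : ℤ → R)) J ↔ HasEquitableSigning A J := by
  refine exists_congr fun ε => forall_congr' fun i => ?_
  rw [← intCast_mem_range_signType_cast (R := R)]
  simp [Units.smul_def]

theorem hasEquitableSigning_iff_exists_split [Ring R] [DecidableEq n] {A : Matrix m n R}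
    {J : Finset n} :
    HasEquitableSigning A J ↔ ∃ J₁ J₂ : Finset n, J₁ ∪ J₂ = J ∧ Disjoint J₁ J₂ ∧
      ∀ i, ∑ j ∈ J₁, A i j - ∑ j ∈ J₂, A i j ∈ range (SignType.cast : SignType → R) := by
  constructor
  · rintro ⟨ε, hε⟩
    refine ⟨J.filter (ε · = 1), J.filter (¬ ε · = 1), Finset.filter_union_filter_not_eq _ _,
      Finset.disjoint_filter_filter_not _ _ _, fun i => ?_⟩
    convert hε i using 1
    rw [Finset.sum_filter, Finset.sum_filter, ← Finset.sum_sub_distrib]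
    refine Finset.sum_congr rfl fun j _ => ?_
    rcases Int.units_eq_one_or (ε j) with h | h <;> simp [h]
  · rintro ⟨J₁, J₂, rfl, hdisj, h⟩
    refine ⟨fun j => if j ∈ J₁ then 1 else -1, fun i => ?_⟩
    convert h i using 1
    rw [Finset.sum_union hdisj, sub_eq_add_neg, ← Finset.sum_neg_distrib]
    congr 1
    · exact Finset.sum_congr rfl fun j hj => by simp [hj]
    · exact Finset.sum_congr rfl fun j hj => by simp [Finset.disjoint_right.1 hdisj hj]

theorem hasEquitableSigning_univ_of_isTotallyUnimodular [Finite m] [Fintype n] {A : Matrix m n ℤ}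
    (hA : A.IsTotallyUnimodular) : HasEquitableSigning A Finset.univ := by
  classical
  let M : Matrix (m ⊕ n) n ℝ := fromRows (A.map Int.cast) 1
  have hM : M.IsTotallyUnimodular :=
    (fromRows_one_isTotallyUnimodular_iff _).2 (isTotallyUnimodular_map_intCast_iff.2 hA)
  have hinj : Function.Injective M.mulVec := fun v w hvw => funext fun j => by
    simpa [M] using congrFun hvw (Sum.inr j)
  obtain ⟨z, hz⟩ := exists_int_abs_mulVec_sub_lt_one hM hinj fun _ => 1 / 2
  have hε : ∀ j, ∃ ε : ℤˣ, (ε : ℤ) = 2 * z j - 1 := by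
    intro j
    have hj : |(z j : ℝ) - 1 / 2| < 1 := by simpa [M] using hz (Sum.inr j)
    have : |2 * z j - 1| < 2 := by
      rw [← Int.cast_lt (R := ℝ)]
      push_cast
      rw [abs_lt] at hj ⊢
      constructor <;> linarith
    rw [abs_lt] at this
    obtain h | h : z j = 1 ∨ z j = 0 := by omega
    · exact ⟨1, by simp [h]⟩
    · exact ⟨-1, by simp [h]⟩
  choose ε hε using hε
  refine ⟨ε, fun i => int_mem_range_signType_cast_iff_abs_le_one.2 (Int.lt_add_one_iff.1 ?_)⟩
  have hsum : ((∑ j, ε j • A i j : ℤ) : ℝ) =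
      2 * ((M *ᵥ fun j => (z j : ℝ)) (Sum.inl i) - (M *ᵥ fun _ => 1 / 2) (Sum.inl i)) := by
    simp only [M, mulVec, dotProduct, fromRows_apply_inl, map_apply, ← Finset.sum_sub_distrib,
      Finset.mul_sum, Units.smul_def, hε, smul_eq_mul]
    push_cast
    exact Finset.sum_congr rfl fun j _ => by ring
  rw [← Int.cast_lt (R := ℝ), Int.cast_abs, hsum, abs_mul, abs_two]
  push_cast
  linarith [hz (Sum.inl i)]

theorem hasEquitableSigning_of_isTotallyUnimodular {A : Matrix m n ℤ}
    (hA : A.IsTotallyUnimodular) (J : Finset n) : HasEquitableSigning A J := by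
  -- There are only finitely many sign vectors indexed by `J`, so finitely many distinct rows.
  let B : Matrix m J ℤ := A.submatrix id (↑)
  have hB : B.IsTotallyUnimodular := hA.submatrix _ _
  have := (finite_range_of_isTotallyUnimodular hB).to_subtype
  let C : Matrix (range B) J ℤ := B.submatrix (rangeSplitting B) id
  have hBC : range B ⊆ range C := fun r hr => ⟨⟨r, hr⟩, apply_rangeSplitting B ⟨r, hr⟩⟩
  exact .of_submatrix_coe
    (.of_range_subset hBC (hasEquitableSigning_univ_of_isTotallyUnimodular (hB.submatrix _ _)))

theorem exists_abs_eq_abs_mulVec_le_one_of_hasEquitableSigning [Fintype n] {A : Matrix m n ℤ}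
    (hA : ∀ J, HasEquitableSigning A J) {b : n → ℤ} (hb : ∀ j, |b j| ≤ 1) :
    ∃ y : n → ℤ, (∀ j, |y j| = |b j|) ∧ ∀ i, |(A *ᵥ y) i| ≤ 1 := by
  obtain ⟨ε, hε⟩ := hA {j | b j ≠ 0}
  refine ⟨fun j => if b j ≠ 0 then ε j else 0, fun j => ?_, fun i => ?_⟩
  · rcases Int.abs_le_one_iff.1 (hb j) with h | h | h <;>
      simp [h, Int.isUnit_iff_abs_eq.1 (ε j).isUnit]
  · convert int_mem_range_signType_cast_iff_abs_le_one.1 (hε i) using 2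
    simp [mulVec, dotProduct, Finset.sum_filter, Units.smul_def, mul_comm]

theorem mulVec_modEq_two_of_abs_eq [Fintype n] (A : Matrix m n ℤ) {b y : n → ℤ}
    (hyb : ∀ j, |y j| = |b j|) (i : m) : (A *ᵥ y) i ≡ (A *ᵥ b) i [ZMOD 2] := by
  refine Int.ModEq.sum fun j _ => Int.ModEq.mul_left _ ?_
  rcases abs_eq_abs.1 (hyb j) with h | h
  · rw [h]
  · rw [h, Int.ModEq]
    omega

theorem exists_mulVec_eq_single_of_abs_eq [Fintype n] [DecidableEq m] {A : Matrix m n ℤ}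
    {b y : n → ℤ} {i₀ : m} {d : ℤ} (hb : A *ᵥ b = Pi.single i₀ d)
    (hyb : ∀ j, |y j| = |b j|) (hy : ∀ i, |(A *ᵥ y) i| ≤ 1) :
    ∃ c, |c| ≤ 1 ∧ A *ᵥ y = Pi.single i₀ c := by
  refine ⟨(A *ᵥ y) i₀, hy i₀, funext fun i => ?_⟩
  by_cases hi : i = i₀
  · rw [hi, Pi.single_eq_same]
  · have hpar := mulVec_modEq_two_of_abs_eq A hyb i
    rw [hb, Pi.single_eq_of_ne hi] at hpar
    rw [Pi.single_eq_of_ne hi]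
    exact Int.eq_zero_of_abs_lt_dvd (Int.modEq_zero_iff_dvd.1 hpar) ((hy i).trans_lt one_lt_two)

theorem abs_det_le_one_of_abs_adjugate_le_one [Fintype n] [DecidableEq n] {B : Matrix n n ℤ}
    (hadj : ∀ i j, |B.adjugate i j| ≤ 1) (hB : ∀ J, HasEquitableSigning B J) :
    |B.det| ≤ 1 := by
  rcases isEmpty_or_nonempty n with _ | ⟨⟨i₀⟩⟩
  · simp
  by_cases hdet : B.det = 0
  · simp [hdet]
  let b : n → ℤ := B.adjugate.col i₀
  have hb : B *ᵥ b = Pi.single i₀ B.det := by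
    rw [show b = B.adjugate *ᵥ Pi.single i₀ 1 from (mulVec_single_one _ _).symm, mulVec_mulVec,
      mul_adjugate, smul_mulVec, one_mulVec, ← Pi.single_smul', smul_eq_mul, mul_one]
  obtain ⟨y, hyb, hy⟩ : ∃ y : n → ℤ, (∀ j, |y j| = |b j|) ∧ ∀ i, |(B *ᵥ y) i| ≤ 1 :=
    exists_abs_eq_abs_mulVec_le_one_of_hasEquitableSigning hB fun j => hadj j i₀
  obtain ⟨c, hc, hBy⟩ := exists_mulVec_eq_single_of_abs_eq hb hyb hy
  have hprop : B.det • y = c • b := by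
    refine sub_eq_zero.1 (eq_zero_of_mulVec_eq_zero hdet ?_)
    rw [mulVec_sub, mulVec_smul, mulVec_smul, hBy, hb, ← Pi.single_smul', ← Pi.single_smul',
      smul_eq_mul, smul_eq_mul, mul_comm, sub_self]
  obtain ⟨j, hj⟩ : ∃ j, b j ≠ 0 := by
    by_contra! hzero
    rw [show b = 0 from funext hzero, mulVec_zero] at hb
    exact hdet (Pi.single_eq_zero_iff.1 hb.symm)
  have habs : |B.det| * |b j| = |c| * |b j| := by
    calc |B.det| * |b j| = |(B.det • y) j| := by
          rw [← hyb, ← abs_mul, Pi.smul_apply, smul_eq_mul]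
      _ = |c| * |b j| := by rw [hprop, Pi.smul_apply, smul_eq_mul, abs_mul]
  exact (mul_right_cancel₀ (abs_ne_zero.2 hj) habs).trans_le hc

theorem isTotallyUnimodular_of_hasEquitableSigning {A : Matrix m n ℤ}
    (hA : ∀ J, HasEquitableSigning A J) : A.IsTotallyUnimodular := by
  intro k
  induction k with
  | zero => exact fun _ _ _ _ => ⟨1, by simp⟩
  | succ k ih =>
    intro f g hf hg
    refine int_mem_range_signType_cast_iff_abs_le_one.2
      (abs_det_le_one_of_abs_adjugate_le_one (fun i j => ?_)
        fun J => (hA (J.map ⟨g, hg⟩)).submatrix f)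
    rw [adjugate_fin_succ_eq_det_submatrix, abs_mul, abs_neg_one_pow, one_mul, submatrix_submatrix]
    exact int_mem_range_signType_cast_iff_abs_le_one.1
      (ih _ _ (hf.comp Fin.succAbove_right_injective) (hg.comp Fin.succAbove_right_injective))

theorem isTotallyUnimodular_iff_forall_hasEquitableSigning [CommRing R] [CharZero R]
    {A : Matrix m n R} : A.IsTotallyUnimodular ↔ ∀ J, HasEquitableSigning A J := by
  suffices h : (∀ i j, A i j ∈ range (SignType.cast : SignType → R)) →
      (A.IsTotallyUnimodular ↔ ∀ J, HasEquitableSigning A J) from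
    ⟨fun hA => (h hA.apply).1 hA,
      fun hA => (h fun i j => (hA {j}).apply_mem_range_signType_cast i).2 hA⟩
  intro hA
  obtain ⟨B, rfl⟩ := exists_map_intCast_eq fun i j =>
    range_signType_cast_subset_range_intCast (hA i j)
  simp only [isTotallyUnimodular_map_intCast_iff, hasEquitableSigning_map_intCast_iff]
  exact ⟨hasEquitableSigning_of_isTotallyUnimodular, isTotallyUnimodular_of_hasEquitableSigning⟩

end Signing

theorem totallyUnimodular_iff_column_split_general {m n R : Type*} [CommRing R] [CharZero R]
    [DecidableEq n] (A : Matrix m n R) :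
    A.IsTotallyUnimodular ↔
      ∀ J : Finset n, ∃ J₁ J₂ : Finset n, J₁ ∪ J₂ = J ∧ Disjoint J₁ J₂ ∧
        ∀ i : m, (∑ j ∈ J₁, A i j) - (∑ j ∈ J₂, A i j) = -1 ∨
                 (∑ j ∈ J₁, A i j) - (∑ j ∈ J₂, A i j) = 0 ∨
                 (∑ j ∈ J₁, A i j) - (∑ j ∈ J₂, A i j) = 1 := by
  simp only [isTotallyUnimodular_iff_forall_hasEquitableSigning,
    hasEquitableSigning_iff_exists_split, mem_range_signType_cast_iff]

/-- Schrijver, Theorem 19.3, column version. A matrix `A` with entries in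
`{-1, 0, 1}` is totally unimodular if and only if every collection `J` of columns of `A` can
be split into two parts `J₁` and `J₂` such that the sum of the columns in `J₁` minus the sum
of the columns in `J₂` is a vector all of whose entries equal `0`, `1`, or `-1`. -/
theorem totallyUnimodular_iff_column_split {m n : Type*} [DecidableEq n] (A : Matrix m n ℚ)
    (hA : ∀ i j, A i j = -1 ∨ A i j = 0 ∨ A i j = 1) :
    A.IsTotallyUnimodular ↔
      ∀ J : Finset n, ∃ J₁ J₂ : Finset n, J₁ ∪ J₂ = J ∧ Disjoint J₁ J₂ ∧
        ∀ i : m, (∑ j ∈ J₁, A i j) - (∑ j ∈ J₂, A i j) = -1 ∨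
                 (∑ j ∈ J₁, A i j) - (∑ j ∈ J₂, A i j) = 0 ∨
                 (∑ j ∈ J₁, A i j) - (∑ j ∈ J₂, A i j) = 1 :=
  totallyUnimodular_iff_column_split_general A
end

section
/- The constraint matrix A of the linear program (OP) (for a single time period, with constraint (1) replaced by its halved form (1')) is totally unimodular. Precisely: let the rows of A be indexed by the disjoint union S ⊔ N ⊔ N ⊔ S ⊔ (N × N) (corresponding to constraint families (1'), (2), (3), (4), (5)) and the columns by the disjoint union Nb ⊔ Nb ⊔ (N × N) (corresponding to variables F^+_{s,n} for (s,n) ∈ Nb, F^-_{s,n} for (s,n) ∈ Nb, and E_{n,n'}), with entries: a row of type (1') indexed by s has entry 1 in each F^+ column (s,n) with (s,n) ∈ Nb and 0 elsewhere; a row of type (2) indexed by n has entry 1 in each F^+ column (s,n) with (s,n) ∈ Nb, entry 1 in each E column (n'', n) for n'' ∈ N, and 0 elsewhere; a row of type (3) indexed by n has entry 1 in each F^- column (s,n) with (s,n) ∈ Nb, entry 1 in each E column (n, n'') for n'' ∈ N, and 0 elsewhere; a row of type (4) indexed by s has entry 1 in each F^+ column (s,n) with (s,n) ∈ Nb, entry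 −1 in each F^- column (s,n) with (s,n) ∈ Nb, and 0 elsewhere; a row of type (5) indexed by (n,n') has entry 1 in the E column (n,n') and 0 elsewhere. Then A is totally unimodular. -/
/-- The single-time-period constraint matrix `A` of (OP), with the capacity constraint (1)
replaced by its halved form (1').  Rows are indexed by `S ⊕ N ⊕ N ⊕ S ⊕ (N × N)`
(constraint families (1'), (2), (3), (4), (5)); columns are indexed by
`Nb ⊕ Nb ⊕ (N × N)` (variables `F⁺_{s,n}`, `F⁻_{s,n}` for `(s,n) ∈ Nb`, and `E_{n,n'}`). -/
def OPConstraintMatrix {N S : Type*} [DecidableEq N] [DecidableEq S]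
    (Nb : S → N → Prop) :
    Matrix (S ⊕ N ⊕ N ⊕ S ⊕ N × N)
      ({p : S × N // Nb p.1 p.2} ⊕ {p : S × N // Nb p.1 p.2} ⊕ N × N) ℚ :=
  fun r c =>
    match r, c with
    -- (1') rows: 1 on the F⁺ columns of station s
    | Sum.inl s, Sum.inl ⟨(s', _), _⟩ => if s' = s then 1 else 0
    | Sum.inl _, _ => 0
    -- (2) rows: 1 on the F⁺ columns of node n and on the E columns (·, n)
    | Sum.inr (Sum.inl n), Sum.inl ⟨(_, n'), _⟩ => if n' = n then 1 else 0
    | Sum.inr (Sum.inl n), Sum.inr (Sum.inr (_, n')) => if n' = n then 1 else 0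
    | Sum.inr (Sum.inl _), _ => 0
    -- (3) rows: 1 on the F⁻ columns of node n and on the E columns (n, ·)
    | Sum.inr (Sum.inr (Sum.inl n)), Sum.inr (Sum.inl ⟨(_, n'), _⟩) =>
        if n' = n then 1 else 0
    | Sum.inr (Sum.inr (Sum.inl n)), Sum.inr (Sum.inr (n', _)) => if n' = n then 1 else 0
    | Sum.inr (Sum.inr (Sum.inl _)), _ => 0
    -- (4) rows: 1 on the F⁺ columns of station s, -1 on the F⁻ columns of station s
    | Sum.inr (Sum.inr (Sum.inr (Sum.inl s))), Sum.inl ⟨(s', _), _⟩ =>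
        if s' = s then 1 else 0
    | Sum.inr (Sum.inr (Sum.inr (Sum.inl s))), Sum.inr (Sum.inl ⟨(s', _), _⟩) =>
        if s' = s then -1 else 0
    | Sum.inr (Sum.inr (Sum.inr (Sum.inl _))), _ => 0
    -- (5) rows: 1 on the E column (n, n')
    | Sum.inr (Sum.inr (Sum.inr (Sum.inr p))), Sum.inr (Sum.inr p') =>
        if p' = p then 1 else 0
    | Sum.inr (Sum.inr (Sum.inr (Sum.inr _))), _ => 0

/-!
Regard the rows of the matrix as the vertices of a rooted forest, and the columns as arcs joining
them: up to a sign depending on the row only, an entry says whether the arc enters or leaves the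
subtree below the row, so that the matrix is a network matrix. The subtrees form a laminar family.
Subtracting from every member of a finite laminar family its proper submembers leaves disjoint
atoms, and this change of rows is unitriangular; hence minors for a laminar family are minors for a
disjoint one. The latter are minors of the incidence matrix of a digraph with some vertices deleted:
either the rows sum to zero, or some column has at most one nonzero entry and Laplace expansion
applies.
-/

open Function Matrix

section Determinant

variable {R : Type*} [CommRing R]

lemma det_mem_range_signTypeCast_of_column {k : ℕ} {M : Matrix (Fin (k + 1)) (Fin (k + 1)) R}
    (i j : Fin (k + 1)) (hcol : ∀ i' ≠ i, M i' j = 0)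
    (hentry : M i j ∈ Set.range (SignType.cast : SignType → R))
    (hminor : (M.submatrix i.succAbove j.succAbove).det ∈
      Set.range (SignType.cast : SignType → R)) :
    M.det ∈ Set.range (SignType.cast : SignType → R) := by
  obtain ⟨a, ha⟩ := hentry
  obtain ⟨b, hb⟩ := hminor
  refine ⟨(-1) ^ (i + j : ℕ) * a * b, ?_⟩
  rw [det_succ_column M j, Fintype.sum_eq_single i fun i' hi' => by rw [hcol i' hi']; ring,
    ← ha, ← hb]
  simp

lemma det_eq_zero_of_sum_column_eq_zero {m : Type*} [Fintype m] [DecidableEq m] [Nonempty m]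
    {M : Matrix m m R} (hM : ∀ j, ∑ i, M i j = 0) : M.det = 0 := by
  rw [← det_transpose]
  have hker : Mᵀ *ᵥ 1 = 0 := funext fun j => by simp [mulVec, dotProduct, hM j]
  exact det_eq_zero_of_mulVec_eq_zero_of_mem_nonZeroDivisors hker
    (i := Classical.arbitrary m) (one_mem _)

lemma det_of_ite_le {m α : Type*} [Fintype m] [DecidableEq m] [PartialOrder α]
    [DecidableLE α] {f : m → α} (hf : Injective f) :
    (of fun i j => if f j ≤ f i then (1 : R) else 0).det = 1 := by
  have hext : Injective (toLinearExtension ∘ f) := hf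
  let _ : LinearOrder m := LinearOrder.lift' _ hext
  have htri : (of fun i j => if f j ≤ f i then (1 : R) else 0).IsLowerTriangular := by
    intro i j hij
    exact if_neg fun hle => (toLinearExtension.monotone hle).not_gt hij
  convert det_of_isLowerTriangular _ htri
  simp

lemma isTotallyUnimodular_signType_mul_row {m n : Type*} {A : Matrix m n R} (d : m → SignType)
    (hA : A.IsTotallyUnimodular) :
    (of fun i j => (d i : R) * A i j).IsTotallyUnimodular := by
  intro k f g hf hg
  obtain ⟨a, ha⟩ := hA k f g hf hg
  refine ⟨(∏ i, d (f i)) * a, ?_⟩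
  have hdet := det_mul_column (fun i => (d (f i) : R)) (A.submatrix f g)
  rw [← ha] at hdet
  rw [SignType.coe_mul, ← SignType.castHom_apply, map_prod]
  exact hdet.symm

end Determinant

/-- The cut matrix of a family `X` of vertex sets in the digraph with arcs `e : tail e → head e`:
the entry at `i`, `e` is `1` if `e` enters `X i`, `-1` if it leaves `X i`, and `0` otherwise.
For the family of all singletons this is the incidence matrix of the digraph. -/
noncomputable def cutMatrix (R : Type*) [AddGroupWithOne R] {V E ι : Type*} (X : ι → Set V)
    (head tail : E → V) : Matrix ι E R :=
  of fun i e => (X i).indicator 1 (head e) - (X i).indicator 1 (tail e)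

/-- A family of sets is laminar if any two of its members are nested or disjoint. -/
def IsLaminar {V ι : Type*} (X : ι → Set V) : Prop :=
  ∀ i j, X i ⊆ X j ∨ X j ⊆ X i ∨ Disjoint (X i) (X j)

/-- The atom of `X i` in the family `X`: the points of `X i` lying in no member of the family that
is properly contained in `X i`. -/
def laminarAtom {V ι : Type*} (X : ι → Set V) (i : ι) : Set V :=
  {v ∈ X i | ∀ j, v ∈ X j → ¬X j ⊂ X i}

/-- The subtree below `r` in a forest of height at most one: the whole component if `r` is a root,
and `{r}` otherwise. The forest is encoded by the idempotent map `ρ` sending each vertex to the root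
of its component. -/
def starSubtree {V : Type*} (ρ : V → V) (r : V) : Set V :=
  {v | v = r ∨ ρ v = r}

lemma isLaminar_starSubtree {V : Type*} {ρ : V → V} (hρ : ∀ v, ρ (ρ v) = ρ v) :
    IsLaminar (starSubtree ρ) := by
  have hsub : ∀ r, starSubtree ρ r ⊆ starSubtree ρ (ρ r) := by
    rintro r v (rfl | rfl)
    · exact Or.inr rfl
    · exact Or.inr (hρ v).symm
  intro r r'
  by_cases hdisj : Disjoint (starSubtree ρ r) (starSubtree ρ r')
  · exact Or.inr (Or.inr hdisj)
  · obtain ⟨v, rfl | rfl, rfl | rfl⟩ := Set.not_disjoint_iff.mp hdisj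
    · exact Or.inl subset_rfl
    · exact Or.inl (hsub v)
    · exact Or.inr (Or.inl (hsub v))
    · exact Or.inl subset_rfl

section CutMatrix

variable {R V E ι : Type*} {X : ι → Set V}

lemma cutMatrix_apply_mem_range [AddGroupWithOne R] (head tail : E → V) (i : ι) (e : E) :
    cutMatrix R X head tail i e ∈ Set.range (SignType.cast : SignType → R) := by
  classical
  simp only [cutMatrix, of_apply, Set.indicator_apply, Pi.one_apply, SignType.range_eq]
  split_ifs <;> simp

lemma exists_forall_ne_notMem_of_pairwise_disjoint [Nonempty ι] (hX : Pairwise (Disjoint on X))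
    (v : V) : ∃ i, ∀ j ≠ i, v ∉ X j := by
  by_cases hv : ∃ i, v ∈ X i
  · obtain ⟨i, hi⟩ := hv
    exact ⟨i, fun j hji hj => Set.disjoint_left.mp (hX hji) hj hi⟩
  · exact ⟨Classical.arbitrary ι, fun j _ hj => hv ⟨j, hj⟩⟩

lemma sum_indicator_one_eq_one [AddCommMonoidWithOne R] [Fintype ι]
    (hX : Pairwise (Disjoint on X)) {v : V} (hv : v ∈ ⋃ i, X i) :
    ∑ i, (X i).indicator (1 : V → R) v = 1 := by
  rw [← Finset.indicator_biUnion_apply _ _ fun i _ j _ hij => hX hij]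
  simp only [Finset.mem_univ, Set.iUnion_true, Set.indicator_of_mem hv, Pi.one_apply]

lemma exists_forall_ne_cutMatrix_apply_eq_zero [AddGroupWithOne R] [Nonempty ι]
    (hX : Pairwise (Disjoint on X)) {head tail : E → V} {e : E}
    (he : ¬(head e ∈ ⋃ i, X i ∧ tail e ∈ ⋃ i, X i)) :
    ∃ i, ∀ j ≠ i, cutMatrix R X head tail j e = 0 := by
  simp only [Set.mem_iUnion, not_and_or, not_exists] at he
  obtain hhead | htail := he
  · obtain ⟨i, htail⟩ := exists_forall_ne_notMem_of_pairwise_disjoint hX (tail e)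
    exact ⟨i, fun j hj => by simp [cutMatrix, hhead j, htail j hj]⟩
  · obtain ⟨i, hhead⟩ := exists_forall_ne_notMem_of_pairwise_disjoint hX (head e)
    exact ⟨i, fun j hj => by simp [cutMatrix, hhead j hj, htail j]⟩

lemma det_cutMatrix_mem_range_of_pairwise_disjoint [CommRing R] {k : ℕ}
    {X : Fin k → Set V} (hX : Pairwise (Disjoint on X)) (head tail : Fin k → V) :
    (cutMatrix R X head tail).det ∈ Set.range (SignType.cast : SignType → R) := by
  induction k with
  | zero => exact ⟨1, by simp⟩
  | succ k ih =>
    by_cases hcover : ∀ e, head e ∈ ⋃ i, X i ∧ tail e ∈ ⋃ i, X i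
    · refine ⟨0, ?_⟩
      rw [SignType.coe_zero, det_eq_zero_of_sum_column_eq_zero]
      intro e
      simp [cutMatrix, sum_indicator_one_eq_one hX (hcover e).1,
        sum_indicator_one_eq_one hX (hcover e).2]
    · obtain ⟨e, he⟩ := not_forall.mp hcover
      obtain ⟨i, hcol⟩ := exists_forall_ne_cutMatrix_apply_eq_zero (R := R) hX he
      have hminor := ih (hX.comp_of_injective (Fin.succAbove_right_injective (p := i)))
        (head ∘ e.succAbove) (tail ∘ e.succAbove)
      exact det_mem_range_signTypeCast_of_column i e hcol
        (cutMatrix_apply_mem_range head tail i e) hminor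

lemma IsLaminar.comp {κ : Type*} (hX : IsLaminar X) (f : κ → ι) : IsLaminar (X ∘ f) :=
  fun i j => hX (f i) (f j)

lemma IsLaminar.subset_or_subset (hX : IsLaminar X) {v : V} {i j : ι} (hi : v ∈ X i)
    (hj : v ∈ X j) : X i ⊆ X j ∨ X j ⊆ X i :=
  (hX i j).imp_right fun h => h.resolve_right (Set.not_disjoint_iff.mpr ⟨v, hi, hj⟩)

lemma IsLaminar.subset_of_mem_laminarAtom (hX : IsLaminar X) {v : V} {i j : ι}
    (hi : v ∈ laminarAtom X i) (hj : v ∈ X j) : X i ⊆ X j :=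
  (hX.subset_or_subset hi.1 hj).elim id fun hji => by_contra fun hij => hi.2 j hj ⟨hji, hij⟩

lemma IsLaminar.pairwise_disjoint_laminarAtom (hX : IsLaminar X) (hinj : Injective X) :
    Pairwise (Disjoint on laminarAtom X) := fun _ _ hij =>
  Set.disjoint_left.mpr fun _ hi hj => hij <| hinj <|
    (hX.subset_of_mem_laminarAtom hi hj.1).antisymm (hX.subset_of_mem_laminarAtom hj hi.1)

lemma exists_mem_laminarAtom [Finite ι] {v : V} {i : ι} (hv : v ∈ X i) :
    ∃ j, v ∈ laminarAtom X j := by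
  obtain ⟨j, hj, hmin⟩ := (Set.toFinite {j | v ∈ X j}).exists_minimalFor X _ ⟨i, hv⟩
  exact ⟨j, hj, fun l hl hlt => hlt.2 (hmin hl hlt.1)⟩

open scoped Classical in
lemma IsLaminar.indicator_eq_sum_laminarAtom [NonAssocSemiring R] [Fintype ι]
    (hX : IsLaminar X) (hinj : Injective X) (i : ι) (v : V) :
    (X i).indicator (1 : V → R) v =
      ∑ j, (if X j ≤ X i then 1 else 0) * (laminarAtom X j).indicator 1 v := by
  by_cases hv : v ∈ X i
  · obtain ⟨j, hj⟩ := exists_mem_laminarAtom hv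
    have hother : ∀ l ≠ j, v ∉ laminarAtom X l := fun l hlj hl =>
      Set.disjoint_left.mp (hX.pairwise_disjoint_laminarAtom hinj hlj) hl hj
    rw [Fintype.sum_eq_single j fun l hl => by simp [hother l hl]]
    simp [hv, hj, hX.subset_of_mem_laminarAtom hj hv]
  · rw [Finset.sum_eq_zero, Set.indicator_of_notMem hv]
    intro j _
    by_cases hji : X j ≤ X i
    · rw [Set.indicator_of_notMem fun hj => hv (hji hj.1), mul_zero]
    · rw [if_neg hji, zero_mul]

open scoped Classical in
lemma IsLaminar.cutMatrix_eq_mul [Ring R] [Fintype ι] (hX : IsLaminar X)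
    (hinj : Injective X) (head tail : E → V) :
    cutMatrix R X head tail =
      (of fun i j => if X j ≤ X i then (1 : R) else 0) * cutMatrix R (laminarAtom X) head tail := by
  ext i e
  simp only [cutMatrix, mul_apply, of_apply, mul_sub, Finset.sum_sub_distrib,
    hX.indicator_eq_sum_laminarAtom hinj i]

theorem IsLaminar.isTotallyUnimodular_cutMatrix [CommRing R] (hX : IsLaminar X)
    (head tail : E → V) : (cutMatrix R X head tail).IsTotallyUnimodular := by
  classical
  intro k f g _ _
  change (cutMatrix R (X ∘ f) (head ∘ g) (tail ∘ g)).det ∈ _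
  have hXf := hX.comp f
  by_cases hinj : Injective (X ∘ f)
  · rw [hXf.cutMatrix_eq_mul hinj, det_mul, det_of_ite_le hinj, one_mul]
    exact det_cutMatrix_mem_range_of_pairwise_disjoint (hXf.pairwise_disjoint_laminarAtom hinj) _ _
  · obtain ⟨i, j, hij, hne⟩ := not_injective_iff.mp hinj
    refine ⟨0, ?_⟩
    rw [SignType.coe_zero, det_zero_of_row_eq hne]
    ext e
    simp only [cutMatrix, of_apply, hij]

end CutMatrix

section ConstraintMatrix

variable {N S : Type*}

/-- The root of the star containing each row, in the forest on the rows of `OPConstraintMatrix` in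
which row `s` of (1') is a child of row `s` of (4), row `(n, n')` of (5) is a child of row `n` of
(3), and all other rows are roots. -/
def opRoot : S ⊕ N ⊕ N ⊕ S ⊕ N × N → S ⊕ N ⊕ N ⊕ S ⊕ N × N
  | .inl s => .inr (.inr (.inr (.inl s)))
  | .inr (.inr (.inr (.inr (n, _)))) => .inr (.inr (.inl n))
  | r => r

/-- The head of the arc represented by a column of `OPConstraintMatrix`: row `s` of (1') for
`F⁺_{s,n}`, row `n` of (3) for `F⁻_{s,n}`, row `(n, n')` of (5) for `E_{n,n'}`. -/
def opHead (Nb : S → N → Prop) :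
    {p : S × N // Nb p.1 p.2} ⊕ {p : S × N // Nb p.1 p.2} ⊕ N × N → S ⊕ N ⊕ N ⊕ S ⊕ N × N
  | .inl c => .inl c.1.1
  | .inr (.inl c) => .inr (.inr (.inl c.1.2))
  | .inr (.inr p) => .inr (.inr (.inr (.inr p)))

/-- The tail of the arc represented by a column of `OPConstraintMatrix`: row `n` of (2) for
`F⁺_{s,n}`, row `s` of (4) for `F⁻_{s,n}`, row `n'` of (2) for `E_{n,n'}`. -/
def opTail (Nb : S → N → Prop) :
    {p : S × N // Nb p.1 p.2} ⊕ {p : S × N // Nb p.1 p.2} ⊕ N × N → S ⊕ N ⊕ N ⊕ S ⊕ N × N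
  | .inl c => .inr (.inl c.1.2)
  | .inr (.inl c) => .inr (.inr (.inr (.inl c.1.1)))
  | .inr (.inr p) => .inr (.inl p.2)

/-- The sign relating a row of `OPConstraintMatrix` to the cut matrix of the subtrees of `opRoot`:
it is `-1` on the rows of (2), which arcs leave but never enter, and `1` on all others. -/
def opRowSign : S ⊕ N ⊕ N ⊕ S ⊕ N × N → SignType
  | .inr (.inl _) => -1
  | _ => 1

lemma opRoot_opRoot (r : S ⊕ N ⊕ N ⊕ S ⊕ N × N) : opRoot (opRoot r) = opRoot r := by
  rcases r with s | n | n | s | p <;> rfl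

lemma OPConstraintMatrix_eq_rowSign_mul_cutMatrix [DecidableEq N] [DecidableEq S]
    (Nb : S → N → Prop) :
    OPConstraintMatrix Nb =
      of fun r c =>
        (opRowSign r : ℚ) * cutMatrix ℚ (starSubtree opRoot) (opHead Nb) (opTail Nb) r c := by
  classical
  ext r c
  rcases r with s | n | n | s | ⟨n, m⟩ <;>
    rcases c with ⟨⟨s', n'⟩, hc⟩ | ⟨⟨s', n'⟩, hc⟩ | ⟨n', m'⟩ <;>
    simp [OPConstraintMatrix, cutMatrix, opRowSign, starSubtree, opRoot, opHead, opTail,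
      Set.indicator_apply, neg_ite]

end ConstraintMatrix

/-- part of the proof of Property 1. The constraint matrix of (OP) for a
single time period, with constraint (1) replaced by its halved form (1'), is totally
unimodular. -/
theorem OPConstraintMatrix_isTotallyUnimodular {N S : Type*} [DecidableEq N] [DecidableEq S]
    (Nb : S → N → Prop) :
    (OPConstraintMatrix Nb).IsTotallyUnimodular := by
  rw [OPConstraintMatrix_eq_rowSign_mul_cutMatrix]
  exact isTotallyUnimodular_signType_mul_row opRowSign
    ((isLaminar_starSubtree opRoot_opRoot).isTotallyUnimodular_cutMatrix (opHead Nb) (opTail Nb))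
end

section
/- In the two-node, three-station, single-period instance with constraint (5) included, the minimum of Σ_{n,n'} E_{n,n'} over all feasible solutions equals 10. -/
open Finset

/-- Neighbourhood relation of the two-node, three-station example:
`Nb = {(s₁,n₁), (s₂,n₂), (s₃,n₂)}`. -/
def exNb (s : Fin 3) (n : Fin 2) : Prop :=
  (s = 0 ∧ n = 0) ∨ (s = 1 ∧ n = 1) ∨ (s = 2 ∧ n = 1)

instance : ∀ s n, Decidable (exNb s n) := fun s n => by unfold exNb; infer_instance

/-- Origin–destination matrix of the example: 10 trips each way between the two nodes. -/
def exOD (n n' : Fin 2) : ℝ := if n = n' then 0 else 10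

/-! In the sum of the `n`-th row and the `n`-th column of `E` only the diagonal entry `E n n` is
counted twice, and (5) bounds it by `OD n n`. Hence all of the demand `f⁺ n + f⁻ n` beyond the
capacity of the stations next to `n`, except for at most `OD n n`, is visible in `∑ E`. At `n₁` this
gives `∑ E ≥ 10 + 10 - 10 - 0`, and leaving half of every demand unmet attains the bound. -/

theorem sum_row_add_sum_col_le {ι M : Type*} [Fintype ι] [AddCommMonoid M] [PartialOrder M]
    [IsOrderedAddMonoid M] {A : ι → ι → M} (hA : ∀ i j, 0 ≤ A i j) (i : ι) :
    ∑ j, A i j + ∑ j, A j i ≤ ∑ j, ∑ k, A j k + A i i := by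
  classical
  have col_le : ∑ j ∈ univ.erase i, A j i ≤ ∑ j ∈ univ.erase i, ∑ k, A j k :=
    sum_le_sum fun j _ => single_le_sum (fun k _ => hA j k) (mem_univ i)
  calc ∑ j, A i j + ∑ j, A j i
      = ∑ j, A i j + ∑ j ∈ univ.erase i, A j i + A i i := by
        rw [← sum_erase_add univ (fun j => A j i) (mem_univ i), add_assoc]
    _ ≤ ∑ j, A i j + ∑ j ∈ univ.erase i, ∑ k, A j k + A i i := by gcongr
    _ = ∑ j, ∑ k, A j k + A i i := by
        rw [add_sum_erase univ (fun j => ∑ k, A j k) (mem_univ i)]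

/-- Feasibility of `(Fp, Fm, E)` for the single-period problem (OP), for stations `S`, nodes `N` and
flows in an ordered group `R`. The paper's station capacity `v * z s` is `cap s`, and its `f⁺ n` and
`f⁻ n` are written out as column and row sums of `OD`. -/
structure IsFeasible {S N R : Type*} [Fintype S] [Fintype N] [AddCommGroup R] [PartialOrder R]
    (Nb : S → N → Prop) [∀ s n, Decidable (Nb s n)] (cap : S → R) (OD : N → N → R)
    (Fp Fm : S → N → R) (E : N → N → R) : Prop where
  inflow_nonneg : ∀ s n, 0 ≤ Fp s n
  outflow_nonneg : ∀ s n, 0 ≤ Fm s n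
  unmet_nonneg : ∀ n n', 0 ≤ E n n'
  inflow_eq_zero : ∀ s n, ¬ Nb s n → Fp s n = 0
  outflow_eq_zero : ∀ s n, ¬ Nb s n → Fm s n = 0
  sum_flow_le_cap : ∀ s, ∑ n with Nb s n, (Fp s n + Fm s n) ≤ cap s
  sum_inflow_add_unmet : ∀ n, ∑ s with Nb s n, Fp s n + ∑ n', E n' n = ∑ n', OD n' n
  sum_outflow_add_unmet : ∀ n, ∑ s with Nb s n, Fm s n + ∑ n', E n n' = ∑ n', OD n n'
  sum_net_flow : ∀ s, ∑ n with Nb s n, (Fp s n - Fm s n) = 0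
  unmet_le_demand : ∀ n n', E n n' ≤ OD n n'

namespace IsFeasible

variable {S N R : Type*} [Fintype S] [Fintype N] [AddCommGroup R] [PartialOrder R]
  {Nb : S → N → Prop} [∀ s n, Decidable (Nb s n)] {cap : S → R} {OD : N → N → R}

theorem of_symmetric {F : S → N → R} {E : N → N → R}
    (hOD : ∀ n n', OD n n' = OD n' n) (hE : ∀ n n', E n n' = E n' n)
    (F_nonneg : ∀ s n, 0 ≤ F s n) (E_nonneg : ∀ n n', 0 ≤ E n n')
    (F_eq_zero : ∀ s n, ¬ Nb s n → F s n = 0)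
    (F_le_cap : ∀ s, ∑ n with Nb s n, (F s n + F s n) ≤ cap s)
    (F_add_E : ∀ n, ∑ s with Nb s n, F s n + ∑ n', E n n' = ∑ n', OD n n')
    (E_le_OD : ∀ n n', E n n' ≤ OD n n') :
    IsFeasible Nb cap OD F F E where
  inflow_nonneg := F_nonneg
  outflow_nonneg := F_nonneg
  unmet_nonneg := E_nonneg
  inflow_eq_zero := F_eq_zero
  outflow_eq_zero := F_eq_zero
  sum_flow_le_cap := F_le_cap
  sum_inflow_add_unmet n := by simpa only [hE _ n, hOD _ n] using F_add_E n
  sum_outflow_add_unmet := F_add_E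
  sum_net_flow s := by simp only [sub_self, sum_const_zero]
  unmet_le_demand := E_le_OD

variable [IsOrderedAddMonoid R] {Fp Fm : S → N → R} {E : N → N → R}

theorem flow_le_cap (h : IsFeasible Nb cap OD Fp Fm E) {s : S} {n : N} (hsn : Nb s n) :
    Fp s n + Fm s n ≤ cap s :=
  calc Fp s n + Fm s n
      ≤ ∑ n' with Nb s n', (Fp s n' + Fm s n') :=
        single_le_sum (f := fun n' => Fp s n' + Fm s n')
          (fun n' _ => add_nonneg (h.inflow_nonneg s n') (h.outflow_nonneg s n'))
          ((mem_filter_univ n).mpr hsn)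
    _ ≤ cap s := h.sum_flow_le_cap s

theorem demand_le_cap_add_unmet (h : IsFeasible Nb cap OD Fp Fm E) (n : N) :
    ∑ n', OD n' n + ∑ n', OD n n' ≤ ∑ s with Nb s n, cap s + (∑ m, ∑ n', E m n' + OD n n) :=
  calc ∑ n', OD n' n + ∑ n', OD n n'
      = ∑ s with Nb s n, (Fp s n + Fm s n) + (∑ n', E n n' + ∑ n', E n' n) := by
        rw [← h.sum_inflow_add_unmet, ← h.sum_outflow_add_unmet, sum_add_distrib]
        abel
    _ ≤ ∑ s with Nb s n, cap s + (∑ m, ∑ n', E m n' + E n n) :=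
        add_le_add (sum_le_sum fun s hs => h.flow_le_cap ((mem_filter_univ s).mp hs))
          (sum_row_add_sum_col_le h.unmet_nonneg n)
    _ ≤ ∑ s with Nb s n, cap s + (∑ m, ∑ n', E m n' + OD n n) := by
        gcongr
        exact h.unmet_le_demand n n

end IsFeasible

theorem exOD_nonneg (n n' : Fin 2) : 0 ≤ exOD n n' := by
  unfold exOD
  split_ifs <;> norm_num

theorem exOD_comm (n n' : Fin 2) : exOD n n' = exOD n' n := by
  simp only [exOD, eq_comm]

theorem sum_exOD_row (n : Fin 2) : ∑ n', exOD n n' = 10 := by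
  fin_cases n <;> simp [exOD]

/-- The optimal station flow of the example, used both inward and outward: the single station of
`n₁` works at its capacity `10 = 5 + 5`, and the two stations of `n₂` share the matching load. -/
noncomputable def exFlow : Fin 3 → Fin 2 → ℝ :=
  ![![5, 0], ![0, 5 / 2], ![0, 5 / 2]]

theorem exFlow_nonneg (s : Fin 3) (n : Fin 2) : 0 ≤ exFlow s n := by
  fin_cases s <;> fin_cases n <;> norm_num [exFlow]

theorem exFlow_eq_zero (s : Fin 3) (n : Fin 2) (hsn : ¬ exNb s n) : exFlow s n = 0 := by
  fin_cases s <;> fin_cases n <;> simp_all [exFlow, exNb]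

theorem sum_exFlow_nodes_le (s : Fin 3) : ∑ n with exNb s n, (exFlow s n + exFlow s n) ≤ 10 := by
  fin_cases s <;> simp [sum_filter, exFlow, exNb] <;> norm_num

theorem sum_exFlow_stations (n : Fin 2) : ∑ s with exNb s n, exFlow s n = 5 := by
  fin_cases n <;> simp [sum_filter, Fin.sum_univ_three, exFlow, exNb]

theorem isFeasible_exFlow :
    IsFeasible exNb (fun _ => 10 * 1) exOD exFlow exFlow (fun n n' => exOD n n' / 2) := by
  refine .of_symmetric exOD_comm (fun n n' => by rw [exOD_comm]) exFlow_nonneg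
    (fun n n' => div_nonneg (exOD_nonneg n n') zero_le_two) exFlow_eq_zero
    (fun s => (sum_exFlow_nodes_le s).trans_eq (mul_one 10).symm) (fun n => ?_)
    (fun n n' => half_le_self (exOD_nonneg n n'))
  rw [sum_exFlow_stations, ← sum_div, sum_exOD_row]
  norm_num

theorem ten_le_sum_unmet {Fp Fm : Fin 3 → Fin 2 → ℝ} {E : Fin 2 → Fin 2 → ℝ}
    (h : IsFeasible exNb (fun _ => 10 * 1) exOD Fp Fm E) : 10 ≤ ∑ n, ∑ n', E n n' := by
  have inflow : ∑ n, exOD n 0 = 10 := by simp only [exOD_comm _ 0, sum_exOD_row]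
  have stations : ({s | exNb s 0} : Finset (Fin 3)) = {0} := by decide
  have no_loop : exOD 0 0 = 0 := if_pos rfl
  have bound := h.demand_le_cap_add_unmet 0
  rw [inflow, sum_exOD_row, stations, sum_singleton, no_loop] at bound
  linarith

/-- In the two-node, three-station, single-period instance with
constraint (5) included, the minimum of `∑ n n', E n n'` over all feasible
solutions equals `10`. -/
theorem example_with_constraint5_min_is_ten :
    IsLeast
      { x : ℝ | ∃ (Fp Fm : Fin 3 → Fin 2 → ℝ) (E : Fin 2 → Fin 2 → ℝ),
        (∀ s n, 0 ≤ Fp s n) ∧ (∀ s n, 0 ≤ Fm s n) ∧ (∀ n n', 0 ≤ E n n') ∧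
        (∀ s n, ¬ exNb s n → Fp s n = 0) ∧ (∀ s n, ¬ exNb s n → Fm s n = 0) ∧
        -- (1) station capacity, v = 10, z_s = 1
        (∀ s, ∑ n ∈ univ.filter (fun n => exNb s n), (Fp s n + Fm s n) ≤ 10 * 1) ∧
        -- (2) inward flow
        (∀ n, ∑ s ∈ univ.filter (fun s => exNb s n), Fp s n + ∑ n', E n' n
            = ∑ n', exOD n' n) ∧
        -- (3) outward flow
        (∀ n, ∑ s ∈ univ.filter (fun s => exNb s n), Fm s n + ∑ n', E n n'
            = ∑ n', exOD n n') ∧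
        -- (4) zero net flow
        (∀ s, ∑ n ∈ univ.filter (fun n => exNb s n), (Fp s n - Fm s n) = 0) ∧
        -- (5) unsatisfied trips correspond to actual trips
        (∀ n n', E n n' ≤ exOD n n') ∧
        x = ∑ n, ∑ n', E n n' } 10 := by
  constructor
  · obtain ⟨hFp, hFm, hE, hFp₀, hFm₀, h₁, h₂, h₃, h₄, h₅⟩ := isFeasible_exFlow
    refine ⟨_, _, _, hFp, hFm, hE, hFp₀, hFm₀, h₁, h₂, h₃, h₄, h₅, ?_⟩
    simp only [← sum_div, sum_exOD_row, sum_const, card_univ, Fintype.card_fin]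
    norm_num
  · rintro _ ⟨Fp, Fm, E, hFp, hFm, hE, hFp₀, hFm₀, h₁, h₂, h₃, h₄, h₅, rfl⟩
    exact ten_le_sum_unmet ⟨hFp, hFm, hE, hFp₀, hFm₀, h₁, h₂, h₃, h₄, h₅⟩
end

section
/- The minimal feasible dual capacity variable for a station with neighborhood M equals max(0, max_{n,n'∈M} −(P_n + G_{n'})/2). Precisely: for a finite nonempty set M and functions P, G : M → ℝ, the minimum of U over all pairs (U, R) ∈ ℝ_{≥0} × ℝ satisfying U + P_n + R ≥ 0 and U + G_{n'} − R ≥ 0 for all n, n' ∈ M equals max(0, max_{n,n'∈M} −(P_n + G_{n'})/2). -/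
/-!
Adding `0 ≤ U + P n + R` and `0 ≤ U + G n' - R` eliminates `R` and leaves the pairwise sums
`0 ≤ (U + P n) + (U + G n')`; conversely, if all of these hold, then `R = -(U + inf P)` is feasible.
Each pairwise sum is the lower bound `-(P n + G n') / 2 ≤ U`, so the feasible `U` form a closed
half-line starting at the larger of `0` and the supremum of these bounds.
-/

open Set

section OrderedGroup

variable {ι κ : Type*} {α : Type*} [AddCommGroup α] [PartialOrder α] [IsOrderedAddMonoid α]

lemma isGLB_range_const_add {f : ι → α} {m : α} (c : α) (hf : IsGLB (range f) m) :
    IsGLB (range fun i => c + f i) (c + m) := by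
  have himage : IsGLB (OrderIso.addLeft c '' range f) (c + m) :=
    (OrderIso.addLeft c).isGLB_image'.2 hf
  rwa [← range_comp] at himage

lemma exists_forall_nonneg_add_and_nonneg_sub_iff {f : ι → α} {g : κ → α} {m : α}
    (hf : IsGLB (range f) m) :
    (∃ r, ∀ i j, 0 ≤ f i + r ∧ 0 ≤ g j - r) ↔ ∀ i j, 0 ≤ f i + g j := by
  constructor
  · rintro ⟨r, hr⟩ i j
    calc
      0 ≤ (f i + r) + (g j - r) := add_nonneg (hr i j).1 (hr i j).2
      _ = f i + g j := by abel
  · intro hfg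
    have hg : ∀ j, -g j ≤ m := fun j =>
      hf.2 (forall_mem_range.2 fun i => neg_le_iff_add_nonneg.2 (hfg i j))
    refine ⟨-m, fun i j => ⟨?_, ?_⟩⟩
    · simpa using hf.1 (mem_range_self i)
    · simpa [add_comm] using neg_le_iff_add_nonneg.1 (hg j)

end OrderedGroup

section OrderedField

variable {ι κ : Type*} {K : Type*} [Field K] [LinearOrder K] [IsStrictOrderedRing K]
  {P : ι → K} {G : κ → K} {p m : K}

lemma neg_add_div_two_le_iff {x y u : K} : -(x + y) / 2 ≤ u ↔ 0 ≤ (u + x) + (u + y) := by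
  rw [div_le_iff₀ two_pos, neg_le_iff_add_nonneg]
  ring_nf

lemma exists_forall_dual_constraints_iff (hP : IsGLB (range P) p) {u : K} :
    (∃ R, ∀ n n', 0 ≤ u + P n + R ∧ 0 ≤ u + G n' - R) ↔ ∀ n n', -(P n + G n') / 2 ≤ u := by
  simp only [neg_add_div_two_le_iff]
  exact exists_forall_nonneg_add_and_nonneg_sub_iff (isGLB_range_const_add u hP)

theorem minimal_dual_capacity_variable_general (hP : IsGLB (range P) p)
    (hm : IsLUB (range fun q : ι × κ => -(P q.1 + G q.2) / 2) m) :
    IsLeast {u : K | 0 ≤ u ∧ ∃ R, ∀ n n', 0 ≤ u + P n + R ∧ 0 ≤ u + G n' - R} (max 0 m) := by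
  have hfeasible : {u : K | 0 ≤ u ∧ ∃ R, ∀ n n', 0 ≤ u + P n + R ∧ 0 ≤ u + G n' - R} =
      Ici (max 0 m) := by
    ext u
    simp only [mem_ofPred_eq, mem_Ici, max_le_iff, exists_forall_dual_constraints_iff hP,
      isLUB_le_iff hm, mem_upperBounds, forall_mem_range, Prod.forall]
  exact hfeasible ▸ isLeast_Ici

end OrderedField

/-- The minimal feasible dual capacity variable for a station with
neighbourhood `M` equals `max 0 (max_{n,n'∈M} -(P n + G n')/2)`: the minimum of `U` over all
pairs `(U, R) ∈ ℝ≥0 × ℝ` satisfying the dual feasibility constraints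
`U + P n + R ≥ 0` and `U + G n' - R ≥ 0` for all `n, n' ∈ M` is
`max 0 (max_{n,n'} -(P n + G n')/2)`. -/
theorem minimal_dual_capacity_variable {M : Type*} [Fintype M] [Nonempty M]
    (P G : M → ℝ) :
    IsLeast
      { u : ℝ | 0 ≤ u ∧ ∃ R : ℝ, ∀ n n' : M, 0 ≤ u + P n + R ∧ 0 ≤ u + G n' - R }
      (max 0 (Finset.univ.sup' Finset.univ_nonempty
        (fun p : M × M => -(P p.1 + G p.2) / 2))) := by
  rw [Finset.sup'_univ_eq_ciSup]
  exact minimal_dual_capacity_variable_general (isGLB_ciInf (finite_range P).bddBelow)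
    (isLUB_ciSup (finite_range _).bddAbove)
end

section
/- A finite set of points in the plane whose pairwise ℓ₁ distances are at most 2w admits a common station location within walking distance w of all of them: if x₁, …, x_k ∈ ℝ² satisfy ‖x_i − x_j‖₁ ≤ 2w for all i, j, then there exists s ∈ ℝ² with ‖s − x_i‖₁ ≤ w for all i. -/
/-- The ℓ₁ distance between two points of the plane. -/
def l1dist (p q : ℝ × ℝ) : ℝ := |p.1 - q.1| + |p.2 - q.2|

/-!
Rotating the plane by 45° turns ℓ₁ balls into axis-parallel squares: the ℓ₁ distance is the maximum
of the distances between the coordinate sums and between the coordinate differences. Balls therefore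
have a common point as soon as the intervals cut out in each of the two rotated coordinates do, and
by Helly's theorem on the line this only requires the intervals to meet pairwise.
-/

theorem nonempty_iInter_Icc_of_forall_le {α : Type*} [ConditionallyCompleteLattice α] [Nonempty α]
    {ι : Sort*} {a b : ι → α} (h : ∀ i j, a i ≤ b j) : (⋂ i, Set.Icc (a i) (b i)).Nonempty := by
  cases isEmpty_or_nonempty ι
  · simp
  · obtain ⟨c, hac, hcb⟩ := exists_between_of_forall_le (Set.range_nonempty a)
      (Set.range_nonempty b) (Set.forall_mem_range.2 fun i => Set.forall_mem_range.2 (h i))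
    exact ⟨c, Set.mem_iInter.2 fun i => ⟨hac ⟨i, rfl⟩, hcb ⟨i, rfl⟩⟩⟩

section OrderedGroup

variable {α : Type*} [AddCommGroup α]

theorem exists_forall_abs_sub_le [ConditionallyCompleteLinearOrder α] [IsOrderedAddMonoid α]
    {ι : Sort*} {f r : ι → α} (h : ∀ i j, |f i - f j| ≤ r i + r j) :
    ∃ c, ∀ i, |c - f i| ≤ r i := by
  have endpoints_le (i j : ι) : f i - r i ≤ f j + r j := by
    rw [sub_le_iff_le_add, add_assoc, add_comm (r j), ← sub_le_iff_le_add']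
    exact (le_abs_self _).trans (h i j)
  obtain ⟨c, hc⟩ := nonempty_iInter_Icc_of_forall_le endpoints_le
  refine ⟨c, fun i => ?_⟩
  obtain ⟨hl, hu⟩ := Set.mem_iInter.1 hc i
  exact abs_sub_le_iff.2 ⟨sub_le_iff_le_add'.2 hu, sub_le_comm.1 hl⟩

theorem abs_add_abs_eq_max [LinearOrder α] [IsOrderedAddMonoid α] (a b : α) :
    |a| + |b| = max |a + b| |a - b| := by
  refine le_antisymm ?_ (max_le (abs_add_le a b) (abs_sub a b))
  have abs_sub_eq_iff : |a - b| = |a| + |b| ↔ 0 ≤ a ∧ b ≤ 0 ∨ a ≤ 0 ∧ 0 ≤ b := by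
    simpa [sub_eq_add_neg] using abs_add_eq_add_abs_iff a (-b)
  have same_or_opposite_sign : |a + b| = |a| + |b| ∨ |a - b| = |a| + |b| := by
    rw [abs_add_eq_add_abs_iff, abs_sub_eq_iff]
    grind
  exact le_max_iff.2 (same_or_opposite_sign.imp Eq.ge Eq.ge)

end OrderedGroup

theorem l1dist_eq_max (p q : ℝ × ℝ) :
    l1dist p q = max |(p.1 + p.2) - (q.1 + q.2)| |(p.1 - p.2) - (q.1 - q.2)| := by
  rw [l1dist, abs_add_abs_eq_max, add_sub_add_comm, sub_sub_sub_comm]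

theorem common_station_location_general {ι : Sort*} (x : ι → ℝ × ℝ) (r : ι → ℝ)
    (hx : ∀ i j, l1dist (x i) (x j) ≤ r i + r j) :
    ∃ s : ℝ × ℝ, ∀ i, l1dist s (x i) ≤ r i := by
  simp only [l1dist_eq_max, max_le_iff] at hx ⊢
  obtain ⟨u, hu⟩ := exists_forall_abs_sub_le fun i j => (hx i j).1
  obtain ⟨v, hv⟩ := exists_forall_abs_sub_le fun i j => (hx i j).2
  have sum_eq : (u + v) / 2 + (u - v) / 2 = u := by ring
  have diff_eq : (u + v) / 2 - (u - v) / 2 = v := by ring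
  refine ⟨((u + v) / 2, (u - v) / 2), fun i => ?_⟩
  rw [sum_eq, diff_eq]
  exact ⟨hu i, hv i⟩

/-- A finite set of points in the plane whose pairwise ℓ₁ distances are at
most `2w` admits a common station location within walking distance `w` of all of them. -/
theorem common_station_location (w : ℝ) (hw : 0 < w) (k : ℕ) (x : Fin k → ℝ × ℝ)
    (hx : ∀ i j, l1dist (x i) (x j) ≤ 2 * w) :
    ∃ s : ℝ × ℝ, ∀ i, l1dist s (x i) ≤ w :=
  common_station_location_general x (fun _ => w) fun i j => (hx i j).trans_eq (two_mul w)
end
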